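/- Suppose every fundamental weight of 𝔤 is self-dual (ϖ_j = ϖ̄_j for all j), and let μ be a dominant integral weight, so that V_μ is either orthogonal or symplectic. If V_μ is orthogonal, then (adj(𝔤) ⊗ S²V_μ)^𝔤 = 0 and dim((adj(𝔤) ⊗ Λ²V_μ)^𝔤) equals the number of indices j with ⟨μ, α_j∨⟩ > 0; if V_μ is symplectic, then (adj(𝔤) ⊗ Λ²V_μ)^𝔤 = 0 and dim((adj(𝔤) ⊗ S²V_μ)^𝔤) equals the number of indices j with ⟨μ, α_j∨⟩ > 0. -/

import Mathlib

open scoped TensorProduct Classical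
open LieAlgebra LieModule Module

namespace AdjPaper

variable {L : Type} [LieRing L] [LieAlgebra ℂ L]

/-- `χ` is a root of `L` relative to the Cartan subalgebra `H`: a nonzero linear functional
on `H` with nontrivial root space. -/
def IsRoot (H : LieSubalgebra ℂ L) [H.IsCartanSubalgebra] (χ : Module.Dual ℂ H) : Prop :=
  χ ≠ 0 ∧ rootSpace H ⇑χ ≠ ⊥

/-- `t` is the coroot `χ∨` of the root `χ`: it lies in `⁅𝔤_χ, 𝔤_{-χ}⁆` and satisfies
`χ t = 2`. -/
def IsCoroot (H : LieSubalgebra ℂ L) [H.IsCartanSubalgebra] (χ : Module.Dual ℂ H) (t : H) : Prop :=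
  χ t = 2 ∧ ∃ e ∈ rootSpace H ⇑χ, ∃ f ∈ rootSpace H ⇑(-χ), (t : L) = ⁅e, f⁆

/-- `α` enumerates the simple roots of a base of the root system of `(L, H)`. -/
structure IsBase (H : LieSubalgebra ℂ L) [H.IsCartanSubalgebra] {r : ℕ} (α : Fin r → Module.Dual ℂ H) : Prop where
  isRoot : ∀ j, IsRoot H (α j)
  indep : LinearIndependent ℂ α
  pos_neg : ∀ χ : Module.Dual ℂ H, IsRoot H χ →
    (∃ c : Fin r → ℕ, χ = ∑ j, (c j : ℂ) • α j) ∨ (∃ c : Fin r → ℕ, χ = -∑ j, (c j : ℂ) • α j)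

/-- `χ` is a positive root relative to the base `α`. -/
def IsPosRoot (H : LieSubalgebra ℂ L) [H.IsCartanSubalgebra] {r : ℕ} (α : Fin r → Module.Dual ℂ H)
    (χ : Module.Dual ℂ H) : Prop :=
  IsRoot H χ ∧ ∃ c : Fin r → ℕ, χ = ∑ j, (c j : ℂ) • α j

/-- A weight `μ` is dominant integral: all its pairings `⟨μ, α_j∨⟩ = μ (hc j)` with the
simple coroots `hc j` are non-negative integers. -/
def IsDomInt {H : LieSubalgebra ℂ L} {r : ℕ} (hc : Fin r → H) (μ : Module.Dual ℂ H) : Prop :=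
  ∀ j, ∃ n : ℕ, μ (hc j) = (n : ℂ)

/-- `V` is an irreducible `L`-module with highest weight `μ` (relative to the Cartan
subalgebra `H` and the base `α`): it is irreducible and possesses a nonzero vector of
`H`-weight `μ` annihilated by all positive root spaces. -/
def IsHWIrrep (H : LieSubalgebra ℂ L) [H.IsCartanSubalgebra] {r : ℕ} (α : Fin r → Module.Dual ℂ H)
    (μ : Module.Dual ℂ H) (V : Type) [AddCommGroup V] [Module ℂ V]
    [LieRingModule L V] [LieModule ℂ L V] : Prop :=
  IsSimpleOrder (LieSubmodule ℂ L V) ∧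
  ∃ v : V, v ≠ 0 ∧ (∀ x : H, ⁅(x : L), v⁆ = μ x • v) ∧
    ∀ χ : Module.Dual ℂ H, IsPosRoot H α χ → ∀ e ∈ rootSpace H ⇑χ, ⁅e, v⁆ = 0

/-- `W` is isomorphic to the dual representation `V*`: there is a nondegenerate
`𝔤`-invariant pairing `W × V → ℂ`. -/
def IsDualPair (W V : Type) [AddCommGroup W] [Module ℂ W] [LieRingModule L W]
    [AddCommGroup V] [Module ℂ V] [LieRingModule L V] : Prop :=
  ∃ B : W →ₗ[ℂ] V →ₗ[ℂ] ℂ,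
    (∀ w, (∀ v, B w v = 0) → w = 0) ∧ (∀ v, (∀ w, B w v = 0) → v = 0) ∧
    ∀ (x : L) (w : W) (v : V), B ⁅x, w⁆ v + B w ⁅x, v⁆ = 0

/-- `V` is an orthogonal representation: it has a nondegenerate invariant symmetric
bilinear form. -/
def IsOrthogonalRep (V : Type) [AddCommGroup V] [Module ℂ V] [LieRingModule L V] : Prop :=
  ∃ B : V →ₗ[ℂ] V →ₗ[ℂ] ℂ,
    (∀ v w, B v w = B w v) ∧ (∀ v, (∀ w, B v w = 0) → v = 0) ∧
    ∀ (x : L) (v w : V), B ⁅x, v⁆ w + B v ⁅x, w⁆ = 0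

/-- `V` is a symplectic representation: it has a nondegenerate invariant alternating
bilinear form. -/
def IsSymplecticRep (V : Type) [AddCommGroup V] [Module ℂ V] [LieRingModule L V] : Prop :=
  ∃ B : V →ₗ[ℂ] V →ₗ[ℂ] ℂ,
    (∀ v, B v v = 0) ∧ (∀ v, (∀ w, B v w = 0) → v = 0) ∧
    ∀ (x : L) (v w : V), B ⁅x, v⁆ w + B v ⁅x, w⁆ = 0

variable (L) in
/-- The operator on `adj(𝔤) ⊗ V ⊗ V` exchanging the two copies of `V`. -/
noncomputable def swapMap (V : Type) [AddCommGroup V] [Module ℂ V] :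
    (L ⊗[ℂ] (V ⊗[ℂ] V)) →ₗ[ℂ] (L ⊗[ℂ] (V ⊗[ℂ] V)) :=
  LinearMap.lTensor L (TensorProduct.comm ℂ V V).toLinearMap

variable (L) in
/-- The `𝔤`-invariant subspace of `adj(𝔤) ⊗ S²V`, realised inside `adj(𝔤) ⊗ V ⊗ V` as the
invariant vectors fixed by the swap of the two copies of `V`. -/
noncomputable def symSquareInvariants (V : Type) [AddCommGroup V] [Module ℂ V]
    [LieRingModule L V] [LieModule ℂ L V] : Submodule ℂ (L ⊗[ℂ] (V ⊗[ℂ] V)) :=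
  (maxTrivSubmodule ℂ L (L ⊗[ℂ] (V ⊗[ℂ] V)) : Submodule ℂ (L ⊗[ℂ] (V ⊗[ℂ] V))) ⊓
    LinearMap.ker (swapMap L V - LinearMap.id)

variable (L) in
/-- The `𝔤`-invariant subspace of `adj(𝔤) ⊗ Λ²V`, realised inside `adj(𝔤) ⊗ V ⊗ V` as the
invariant vectors anti-fixed by the swap of the two copies of `V`. -/
noncomputable def altSquareInvariants (V : Type) [AddCommGroup V] [Module ℂ V]
    [LieRingModule L V] [LieModule ℂ L V] : Submodule ℂ (L ⊗[ℂ] (V ⊗[ℂ] V)) :=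
  (maxTrivSubmodule ℂ L (L ⊗[ℂ] (V ⊗[ℂ] V)) : Submodule ℂ (L ⊗[ℂ] (V ⊗[ℂ] V))) ⊓
    LinearMap.ker (swapMap L V + LinearMap.id)

/-!
Write `n_j = μ(α_j∨)`. The tensor product `W` of `n_j` copies of each fundamental representation
carries an invariant `ε`-symmetric form `B`, a highest weight vector `w` of weight `μ` and a lowest
weight vector `u` of weight `-μ` with `B(w, u) ≠ 0`. Letting `x` act on the factors of type `j` only
defines equivariant, `B`-skew operators `ρ_j(x)` with `ρ_j(h) w = n_j ϖ_j(h) w` for `h` in the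
Cartan subalgebra. Since the Casimir operator separates dominant highest weights, highest weight
modules are irreducible: `V_μ` embeds in `W` as the submodule generated by `w`, which contains `u`.
So the forms `t_j(x, a, b) = B(ρ_j(x) a, b)` restrict to invariant trilinear forms on `V_μ` of sign
`-ε` in `(a, b)`, with `t_j(h, w, u) = n_j ϖ_j(h) B(w, u)`.

Conversely, an invariant trilinear form `t` is determined by the values `t(α_j∨, w, u)`, and such a
value vanishes if `n_j = 0`, because then `e_j` kills both `w` and `u`. Hence the `t_j` with
`n_j ≠ 0` are a basis of the invariant trilinear forms, all of which have sign `-ε`.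

Lowest weight vectors are treated as highest weight vectors for the opposite base `-α`.
-/

section NatCombination

variable {ι E : Type*} [Fintype ι]

/-- The combination `∑ k_j α_j` with natural coefficients, as a point of the cone spanned by the
family `α`. -/
noncomputable abbrev natCombination [AddCommMonoid E] (α : ι → E) : (ι → ℕ) →ₗ[ℕ] E :=
  Fintype.linearCombination ℕ α

lemma natCombination_apply [AddCommMonoid E] (α : ι → E) (k : ι → ℕ) :
    natCombination α k = ∑ j, k j • α j :=
  Fintype.linearCombination_apply ℕ α k

lemma natCombination_neg [AddCommGroup E] (α : ι → E) (k : ι → ℕ) :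
    natCombination (-α) k = -natCombination α k := by
  simp [natCombination_apply]

variable {K : Type*} [Field K] [CharZero K] [AddCommGroup E] [Module K E] {α : ι → E}

lemma natCombination_injective (hα : LinearIndependent K α) :
    Function.Injective (natCombination α) := fun k l hkl ↦ by
  have hsum : ∑ j, ((k j : K) - l j) • α j = 0 := by
    simpa [natCombination_apply, sub_smul, sub_eq_zero, Nat.cast_smul_eq_nsmul] using hkl
  funext j
  exact_mod_cast sub_eq_zero.mp (Fintype.linearIndependent_iff.mp hα _ hsum j)

lemma natCombination_eq_zero_iff (hα : LinearIndependent K α) {k : ι → ℕ} :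
    natCombination α k = 0 ↔ k = 0 :=
  map_eq_zero_iff _ (natCombination_injective hα)

end NatCombination

section Roots

variable {H : LieSubalgebra ℂ L} [H.IsCartanSubalgebra] {r : ℕ} {α : Fin r → Dual ℂ H}

lemma IsPosRoot.exists_eq_natCombination {χ : Dual ℂ H} (hχ : IsPosRoot H α χ) :
    ∃ k ≠ 0, χ = natCombination α k := by
  obtain ⟨⟨hχ0, -⟩, k, hk⟩ := hχ
  refine ⟨k, ?_, by simp only [hk, natCombination_apply, Nat.cast_smul_eq_nsmul]⟩
  rintro rfl
  exact hχ0 (by simp [hk])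

lemma IsPosRoot.not_isPosRoot_neg (hα : LinearIndependent ℂ α) {χ : Dual ℂ H}
    (hχ : IsPosRoot H α χ) : ¬ IsPosRoot H (-α) χ := fun hχ' ↦ by
  obtain ⟨k, hk, hχk⟩ := hχ.exists_eq_natCombination
  obtain ⟨l, -, hχl⟩ := hχ'.exists_eq_natCombination
  have hkl : natCombination α (k + l) = 0 := by
    rw [map_add, ← hχk, hχl, natCombination_neg, neg_add_cancel]
  exact hk (add_eq_zero.mp ((natCombination_eq_zero_iff hα).mp hkl)).1

lemma IsBase.isPosRoot_simple (hb : IsBase H α) (j : Fin r) : IsPosRoot H α (α j) :=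
  ⟨hb.isRoot j, Pi.single j 1, by simp [Pi.single_apply]⟩

lemma IsBase.isPosRoot_or_isPosRoot_neg (hb : IsBase H α) {χ : Dual ℂ H} (hχ : IsRoot H χ) :
    IsPosRoot H α χ ∨ IsPosRoot H (-α) χ :=
  (hb.pos_neg χ hχ).imp (fun hk ↦ ⟨hχ, hk⟩) fun ⟨k, hk⟩ ↦ ⟨hχ, k, by simp [hk]⟩

lemma IsCoroot.neg {χ : Dual ℂ H} {t : H} (ht : IsCoroot H χ t) : IsCoroot H (-χ) (-t) := by
  obtain ⟨hχt, e, he, f, hf, hef⟩ := ht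
  refine ⟨by simpa using hχt, f, hf, e, by simpa using he, ?_⟩
  rw [← lie_skew, ← hef]
  rfl

variable [FiniteDimensional ℂ L]

lemma isRoot_toLinear {β : Weight ℂ H L} (hβ : β.IsNonZero) : IsRoot H (β.toLinear ℂ H L) :=
  ⟨by simpa using hβ, β.genWeightSpace_ne_bot⟩

lemma eq_top_of_cartan_le_of_rootSpace_le {p : Submodule ℂ L} (hH : H.toSubmodule ≤ p)
    (hroot : ∀ χ : Dual ℂ H, IsRoot H χ → (rootSpace H ⇑χ).toSubmodule ≤ p) : p = ⊤ := by
  have htop := congrArg LieSubmodule.toSubmodule (cartan_sup_iSup_rootSpace_eq_top H)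
  simp only [LieSubmodule.sup_toSubmodule, LieSubmodule.top_toSubmodule,
    LieSubmodule.iSup_toSubmodule] at htop
  rw [eq_top_iff, ← htop]
  exact sup_le hH (iSup₂_le fun β hβ ↦ hroot (β.toLinear ℂ H L) (isRoot_toLinear hβ))

variable [IsKilling ℂ L]

lemma IsRoot.neg {χ : Dual ℂ H} (hχ : IsRoot H χ) : IsRoot H (-χ) :=
  ⟨neg_ne_zero.mpr hχ.1, (-(⟨⇑χ, hχ.2⟩ : Weight ℂ H L)).genWeightSpace_ne_bot⟩

lemma IsPosRoot.neg {χ : Dual ℂ H} (hχ : IsPosRoot H α χ) : IsPosRoot H (-α) (-χ) := by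
  obtain ⟨hχr, k, hk⟩ := hχ
  exact ⟨hχr.neg, k, by simp [hk]⟩

lemma IsBase.neg (hb : IsBase H α) : IsBase H (-α) where
  isRoot j := (hb.isRoot j).neg
  indep := by simpa [funext_iff] using hb.indep.units_smul fun _ ↦ (-1 : ℂˣ)
  pos_neg χ hχ := (hb.pos_neg χ hχ).symm.imp
    (fun ⟨k, hk⟩ ↦ ⟨k, by simp [hk]⟩) fun ⟨k, hk⟩ ↦ ⟨k, by simp [hk]⟩

lemma IsCoroot.exists_isSl2Triple {χ : Dual ℂ H} {t : H} (ht : IsCoroot H χ t) :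
    ∃ e ∈ rootSpace H ⇑χ, ∃ f ∈ rootSpace H ⇑(-χ), IsSl2Triple (t : L) e f := by
  obtain ⟨hχt, e, he, f, hf, hef⟩ := ht
  refine ⟨e, he, f, hf, ⟨?_, hef.symm, ?_, ?_⟩⟩
  · intro h0
    simp [show t = 0 by exact_mod_cast h0] at hχt
  · have hte : ⁅(t : L), e⁆ = χ t • e := IsKilling.lie_eq_smul_of_mem_rootSpace he t
    rw [hte, hχt, ofNat_smul_eq_nsmul]
  · have htf : ⁅(t : L), f⁆ = (-χ) t • f := IsKilling.lie_eq_smul_of_mem_rootSpace hf t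
    rw [htf, LinearMap.neg_apply, hχt, neg_smul, ofNat_smul_eq_nsmul]

end Roots

section Irreducible

lemma lieSubmodule_eq_top_of_mem {R 𝔤 M : Type*} [CommRing R] [LieRing 𝔤] [AddCommGroup M]
    [Module R M] [LieRingModule 𝔤 M] [LieModule.IsIrreducible R 𝔤 M] {N : LieSubmodule R 𝔤 M}
    {m : M} (hm : m ∈ N) (hm0 : m ≠ 0) : N = ⊤ :=
  (eq_bot_or_eq_top N).resolve_left fun h ↦ hm0 (by simpa [h] using hm)

end Irreducible

section LowerHull

variable {K 𝔥 V ι : Type*} [Field K] [LieRing 𝔥] [LieAlgebra K 𝔥]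
variable [AddCommGroup V] [Module K V] [LieRingModule 𝔥 V] [LieModule K 𝔥 V]

variable [Fintype ι] {α : ι → Dual K 𝔥} {μ ν : Dual K 𝔥} {v m : V}

/-- The sum of the line through `v` and of the weight spaces of all weights strictly below `μ`,
in which a highest weight vector `v` of weight `μ` generates its submodule. -/
noncomputable def lowerHull (α : ι → Dual K 𝔥) (μ : Dual K 𝔥) (v : V) : Submodule K V :=
  Submodule.span K {v} ⊔
    ⨆ k : {k : ι → ℕ // k ≠ 0}, (weightSpace V ⇑(μ - natCombination α k.1)).toSubmodule

lemma self_mem_lowerHull (α : ι → Dual K 𝔥) (μ : Dual K 𝔥) (v : V) : v ∈ lowerHull α μ v :=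
  Submodule.mem_sup_left (Submodule.mem_span_singleton_self v)

lemma mem_lowerHull_of_mem_weightSpace {k : ι → ℕ} (hk : k ≠ 0)
    (hm : m ∈ weightSpace V ⇑(μ - natCombination α k)) : m ∈ lowerHull α μ v :=
  Submodule.mem_sup_right <| Submodule.mem_iSup_of_mem (p := fun k : {k : ι → ℕ // k ≠ 0} ↦
    (weightSpace V ⇑(μ - natCombination α k.1)).toSubmodule) ⟨k, hk⟩ hm

lemma lowerHull_le {p : Submodule K V} (hv : v ∈ p)
    (hp : ∀ k ≠ 0, ∀ m ∈ weightSpace V ⇑(μ - natCombination α k), m ∈ p) :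
    lowerHull α μ v ≤ p :=
  sup_le ((Submodule.span_singleton_le_iff_mem v p).mpr hv) (iSup_le fun k ↦ hp k.1 k.2)

variable [LieRing.IsNilpotent 𝔥]

lemma iSupIndep_weightSpace :
    iSupIndep fun ν : Dual K 𝔥 ↦ (weightSpace V ⇑ν).toSubmodule := by
  have h := LieSubmodule.iSupIndep_toSubmodule.mpr (LieModule.iSupIndep_genWeightSpace K 𝔥 V)
  exact (h.comp (f := fun ν : Dual K 𝔥 ↦ (⇑ν : 𝔥 → K)) DFunLike.coe_injective).mono
    fun ν ↦ weightSpace_le_genWeightSpace V ⇑ν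

lemma exists_eq_add_natCombination_of_mem_lowerHull (hm0 : m ≠ 0) (hv : v ∈ weightSpace V ⇑μ)
    (hm : m ∈ weightSpace V ⇑ν) (hmem : m ∈ lowerHull α μ v) :
    ∃ k, μ = ν + natCombination α k := by
  by_contra! hμ
  let p : Submodule K V := ⨆ ξ : Dual K 𝔥, ⨆ _ : ξ ≠ ν, (weightSpace V ⇑ξ).toSubmodule
  have hle (ξ : Dual K 𝔥) (hξ : ξ ≠ ν) : (weightSpace V ⇑ξ).toSubmodule ≤ p :=
    le_iSup₂_of_le ξ hξ le_rfl
  have hp : lowerHull α μ v ≤ p :=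
    lowerHull_le (hle μ (fun h ↦ hμ 0 (by simp [h])) hv)
      fun k _ ↦ hle _ fun h ↦ hμ k (by simp [← h])
  exact hm0 (Submodule.disjoint_def.mp (iSupIndep_weightSpace ν) m hm (hp hmem))

lemma mem_span_singleton_of_mem_lowerHull [CharZero K] (hα : LinearIndependent K α)
    (hv : v ∈ weightSpace V ⇑μ) (hm : m ∈ weightSpace V ⇑μ) (hmem : m ∈ lowerHull α μ v) :
    m ∈ Submodule.span K {v} := by
  obtain ⟨a, ha, b, hb, rfl⟩ := Submodule.mem_sup.mp hmem
  obtain ⟨c, rfl⟩ := Submodule.mem_span_singleton.mp ha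
  have hbμ : b ∈ weightSpace V ⇑μ := by
    simpa using sub_mem hm ((weightSpace V ⇑μ).toSubmodule.smul_mem c hv)
  have hle : (⨆ k : {k : ι → ℕ // k ≠ 0},
      (weightSpace V ⇑(μ - natCombination α k.1)).toSubmodule) ≤
      ⨆ ξ : Dual K 𝔥, ⨆ _ : ξ ≠ μ, (weightSpace V ⇑ξ).toSubmodule :=
    iSup_le fun k ↦ le_iSup₂_of_le (μ - natCombination α k.1)
      (by simpa using (natCombination_eq_zero_iff hα).not.mpr k.2) le_rfl
  have hb0 : b = 0 :=
    Submodule.disjoint_def.mp (iSupIndep_weightSpace μ) b hbμ (hle hb)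
  simpa [hb0] using ha

end LowerHull

section HighestWeightVectors

variable {H : LieSubalgebra ℂ L} [H.IsCartanSubalgebra] {r : ℕ} {α : Fin r → Dual ℂ H}
variable {V : Type*} [AddCommGroup V] [Module ℂ V] [LieRingModule L V] [LieModule ℂ L V]

/-- `v` is a highest weight vector of weight `μ` relative to the base `α`. Lowest weight vectors
are encoded as highest weight vectors for the opposite base `-α`. -/
structure IsHWVector (H : LieSubalgebra ℂ L) [H.IsCartanSubalgebra] (α : Fin r → Dual ℂ H)
    (μ : Dual ℂ H) (v : V) : Prop where
  ne_zero : v ≠ 0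
  mem_weightSpace : v ∈ weightSpace V ⇑μ
  lie_eq_zero : ∀ χ : Dual ℂ H, IsPosRoot H α χ → ∀ e ∈ rootSpace H ⇑χ, ⁅e, v⁆ = 0

lemma IsHWVector.lie_eq_smul {μ : Dual ℂ H} {v : V} (hv : IsHWVector H α μ v) (x : H) :
    ⁅(x : L), v⁆ = μ x • v :=
  (LieModule.mem_weightSpace _ _).mp hv.mem_weightSpace x

/-- The subspace `p` is stable under the root spaces of all roots which are positive
relative to `α`. -/
def IsPosStable (H : LieSubalgebra ℂ L) [H.IsCartanSubalgebra] (α : Fin r → Dual ℂ H)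
    (p : Submodule ℂ V) : Prop :=
  ∀ χ : Dual ℂ H, IsPosRoot H α χ → ∀ e ∈ rootSpace H ⇑χ, ∀ m ∈ p, ⁅e, m⁆ ∈ p

lemma IsHWVector.lie_eq_zero_of_coroot_eq_zero [FiniteDimensional ℂ V] (hb : IsBase H α)
    {i : Fin r} {t : H} {e f : L} (he : e ∈ rootSpace H ⇑(α i))
    (hsl2 : IsSl2Triple (t : L) e f) {ν : Dual ℂ H} {v : V}
    (hv : IsHWVector H α ν v) (hν : ν t = 0) : ⁅f, v⁆ = 0 := by
  have P : hsl2.HasPrimitiveVectorWith v (ν t) :=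
    ⟨hv.ne_zero, hv.lie_eq_smul _, hv.lie_eq_zero _ (hb.isPosRoot_simple i) e he⟩
  simpa using P.pow_toEnd_f_eq_zero_of_eq_nat (n := 0) (by simpa using hν)

variable [FiniteDimensional ℂ L]

/-- The smallest subspace `q` containing `v` and stable under the negative root spaces is a
Lie submodule: the vectors of `q` which `L` maps into `q` again contain `v` and are stable under
the negative root spaces, hence exhaust `q`. -/
lemma IsHWVector.lieSpan_le (hb : IsBase H α) {μ : Dual ℂ H} {v : V} (hv : IsHWVector H α μ v)
    {p : Submodule ℂ V} (hvp : v ∈ p) (hp : IsPosStable H (-α) p) :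
    (LieSubmodule.lieSpan ℂ L {v}).toSubmodule ≤ p := by
  let S : Set (Submodule ℂ V) := {p | v ∈ p ∧ IsPosStable H (-α) p}
  have hvq : v ∈ sInf S := Submodule.mem_sInf.mpr fun p hp ↦ hp.1
  have hq : IsPosStable H (-α) (sInf S) := fun χ hχ f hf m hm ↦
    Submodule.mem_sInf.mpr fun p hp ↦ hp.2 χ hχ f hf m (Submodule.mem_sInf.mp hm p hp)
  let T : Submodule ℂ V := sInf S ⊓ ⨅ x : L, (sInf S).comap (toEnd ℂ L V x)
  have hT {m : V} : m ∈ T ↔ m ∈ sInf S ∧ ∀ x : L, ⁅x, m⁆ ∈ sInf S := by simp [T]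
  have hvT : v ∈ T := by
    refine hT.mpr ⟨hvq, fun x ↦ ?_⟩
    suffices (sInf S).comap ((toEnd ℂ L V : L →ₗ[ℂ] End ℂ V).flip v) = ⊤ from
      this.ge (Submodule.mem_top (x := x))
    refine eq_top_of_cartan_le_of_rootSpace_le (H := H) (fun x hx ↦ ?_) fun χ hχ x hx ↦ ?_
    · have hxv : ⁅x, v⁆ = μ ⟨x, hx⟩ • v := hv.lie_eq_smul ⟨x, hx⟩
      simpa [hxv] using Submodule.smul_mem _ _ hvq
    · rcases hb.isPosRoot_or_isPosRoot_neg hχ with hχ | hχ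
      · simp [hv.lie_eq_zero χ hχ x hx]
      · exact hq χ hχ x hx v hvq
  have hTstable : IsPosStable H (-α) T := fun χ hχ f hf m hm ↦ by
    have hLm := (hT.mp hm).2
    refine hT.mpr ⟨hLm f, fun x ↦ ?_⟩
    rw [leibniz_lie]
    exact add_mem (hLm _) (hq χ hχ f hf _ (hLm x))
  have hqT : sInf S ≤ T := sInf_le ⟨hvT, hTstable⟩
  let Q : LieSubmodule ℂ L V :=
    { sInf S with lie_mem := fun {x m} hm ↦ (hT.mp (hqT hm)).2 x }
  have hspan : LieSubmodule.lieSpan ℂ L {v} ≤ Q := by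
    rw [LieSubmodule.lieSpan_le, Set.singleton_subset_iff]
    exact hvq
  exact le_trans hspan (sInf_le ⟨hvp, hp⟩ : sInf S ≤ p)

variable [IsKilling ℂ L]

lemma lie_mem_weightSpace {χ ν : Dual ℂ H} {x : L} (hx : x ∈ rootSpace H ⇑χ) {m : V}
    (hm : m ∈ weightSpace V ⇑ν) : ⁅x, m⁆ ∈ weightSpace V ⇑(χ + ν) := by
  rw [mem_weightSpace] at hm ⊢
  intro h
  have hhx : ⁅(h : L), x⁆ = χ h • x := IsKilling.lie_eq_smul_of_mem_rootSpace hx h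
  have hhm : ⁅(h : L), m⁆ = ν h • m := hm h
  rw [LieSubalgebra.coe_bracket_of_module, leibniz_lie, hhx, hhm]
  simp [add_smul]

lemma isPosStable_neg_lowerHull {μ : Dual ℂ H} {v : V} (hv : v ∈ weightSpace V ⇑μ) :
    IsPosStable H (-α) (lowerHull α μ v) := by
  intro χ hχ f hf
  obtain ⟨k, hk, rfl⟩ := hχ.exists_eq_natCombination
  suffices lowerHull α μ v ≤ (lowerHull α μ v).comap (toEnd ℂ L V f) from this
  have hshift {l : Fin r → ℕ} {m : V} (hm : m ∈ weightSpace V ⇑(μ - natCombination α l)) :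
      ⁅f, m⁆ ∈ lowerHull α μ v := by
    have hkl : k + l ≠ 0 := fun h ↦ hk (add_eq_zero.mp h).1
    have hfm := lie_mem_weightSpace hf hm
    have hweight : natCombination (-α) k + (μ - natCombination α l) =
        μ - natCombination α (k + l) := by
      rw [natCombination_neg, map_add]
      abel
    rw [hweight] at hfm
    exact mem_lowerHull_of_mem_weightSpace hkl hfm
  exact lowerHull_le (hshift (l := 0) (by simpa using hv)) fun l _ m hm ↦ hshift hm

lemma IsHWVector.lieSpan_le_lowerHull (hb : IsBase H α) {μ : Dual ℂ H} {v : V}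
    (hv : IsHWVector H α μ v) :
    (LieSubmodule.lieSpan ℂ L {v}).toSubmodule ≤ lowerHull α μ v :=
  hv.lieSpan_le hb (self_mem_lowerHull α μ v) (isPosStable_neg_lowerHull hv.mem_weightSpace)

lemma IsHWVector.lowerHull_eq_top (hb : IsBase H α) [LieModule.IsIrreducible ℂ L V]
    {μ : Dual ℂ H} {v : V} (hv : IsHWVector H α μ v) : lowerHull α μ v = ⊤ := by
  have hspan : LieSubmodule.lieSpan ℂ L {v} = ⊤ :=
    lieSubmodule_eq_top_of_mem (LieSubmodule.subset_lieSpan rfl) hv.ne_zero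
  simpa [hspan] using hv.lieSpan_le_lowerHull hb

variable [FiniteDimensional ℂ V]

lemma IsBase.exists_isHWVector [Nontrivial V] (hb : IsBase H α) :
    ∃ (ν : Dual ℂ H) (v : V), IsHWVector H α ν v := by
  let above (χ' χ : Weight ℂ H V) : Prop :=
    ∃ k ≠ 0, χ'.toLinear ℂ H V = χ.toLinear ℂ H V + natCombination α k
  have : IsTrans _ above := ⟨fun _ _ _ ⟨k, hk, hk'⟩ ⟨l, _, hl'⟩ ↦
    ⟨l + k, fun h ↦ hk (add_eq_zero.mp h).2, by rw [hk', hl', map_add, add_assoc]⟩⟩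
  have : Std.Irrefl above := ⟨fun _ ⟨_, hk, hk'⟩ ↦
    hk ((natCombination_eq_zero_iff hb.indep).mp (by simpa using hk'))⟩
  have : Nonempty (Weight ℂ H V) := by
    by_contra! hempty
    have htop := iSup_genWeightSpace_eq_top' ℂ H V
    exact bot_ne_top ((iSup_of_empty _).symm.trans htop)
  obtain ⟨χ, -, hχ⟩ := (Finite.wellFounded_of_trans_of_irrefl above).has_min Set.univ
    Set.univ_nonempty
  obtain ⟨v, hv0, hv⟩ := exists_forall_lie_eq_smul ℂ H V χ
  have hvχ : v ∈ weightSpace V ⇑(χ.toLinear ℂ H V) := (mem_weightSpace _ _).mpr hv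
  refine ⟨χ.toLinear ℂ H V, v, hv0, hvχ, fun ξ hξ e he ↦ ?_⟩
  by_contra hev
  have hmem := weightSpace_le_genWeightSpace V _ (lie_mem_weightSpace he hvχ)
  obtain ⟨k, hk, rfl⟩ := hξ.exists_eq_natCombination
  exact hχ ⟨⇑(natCombination α k + χ.toLinear ℂ H V), fun h ↦ hev (by simpa [h] using hmem)⟩
    (Set.mem_univ _) ⟨k, hk, add_comm _ _⟩

lemma IsBase.exists_isHWVector_mem (hb : IsBase H α) {N : LieSubmodule ℂ L V} (hN : N ≠ ⊥) :
    ∃ (ν : Dual ℂ H) (v : V), v ∈ N ∧ IsHWVector H α ν v := by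
  have : Nontrivial N := (LieSubmodule.nontrivial_iff_ne_bot ℂ L V).mpr hN
  obtain ⟨ν, v, hv⟩ := hb.exists_isHWVector (V := N)
  refine ⟨ν, v, v.2, by simpa using hv.ne_zero, ?_, fun χ hχ e he ↦ ?_⟩
  · exact (mem_weightSpace _ _).mpr fun x ↦ congrArg Subtype.val (hv.lie_eq_smul x)
  · exact congrArg Subtype.val (hv.lie_eq_zero χ hχ e he)

lemma IsHWVector.isDomInt (hb : IsBase H α) {hc : Fin r → H}
    (hco : ∀ j, IsCoroot H (α j) (hc j)) {ν : Dual ℂ H} {v : V} (hv : IsHWVector H α ν v) :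
    IsDomInt hc ν := fun i ↦ by
  obtain ⟨e, he, f, -, t⟩ := (hco i).exists_isSl2Triple
  have P : t.HasPrimitiveVectorWith v (ν (hc i)) :=
    ⟨hv.ne_zero, hv.lie_eq_smul _, hv.lie_eq_zero _ (hb.isPosRoot_simple i) e he⟩
  exact P.exists_nat

end HighestWeightVectors

section CasimirOperator

variable {R 𝔤 ι : Type*} [CommRing R] [LieRing 𝔤] [LieAlgebra R 𝔤] [Fintype ι]
variable (V : Type*) [AddCommGroup V] [Module R V] [LieRingModule 𝔤 V] [LieModule R 𝔤 V]

/-- The operator by which `∑ a_i a'_i` acts on the module `V`: the Casimir operator when `a` and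
`a'` are dual families for an invariant form. -/
noncomputable def casimirOperator (a a' : ι → 𝔤) : End R V :=
  ∑ i, toEnd R 𝔤 V (a i) ∘ₗ toEnd R 𝔤 V (a' i)

variable {V}

lemma casimirOperator_apply (a a' : ι → 𝔤) (m : V) :
    casimirOperator (R := R) V a a' m = ∑ i, ⁅a i, ⁅a' i, m⁆⁆ := by
  simp [casimirOperator]

lemma sum_smul_eq_of_dual_expansion {M : Type*} [AddCommGroup M] [Module R M]
    {Φ : LinearMap.BilinForm R M} (hΦ : Φ.IsSymm) (hnd : Φ.SeparatingLeft) {a a' : ι → M}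
    (h : ∀ y, ∑ i, Φ (a' i) y • a i = y) (y : M) : ∑ i, Φ (a i) y • a' i = y := by
  refine sub_eq_zero.mp (hnd _ fun x ↦ ?_)
  rw [map_sub, LinearMap.sub_apply, sub_eq_zero, map_sum, LinearMap.sum_apply]
  conv_rhs => rw [← h x, map_sum]
  refine Finset.sum_congr rfl fun i _ ↦ ?_
  simp only [map_smul, LinearMap.smul_apply, smul_eq_mul, hΦ.eq (a i) y, mul_comm]

lemma casimirOperator_lie {Φ : LinearMap.BilinForm R 𝔤} (hΦ : Φ.IsSymm)
    (hnd : Φ.SeparatingLeft) (hinv : Φ.lieInvariant 𝔤) {a a' : ι → 𝔤}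
    (h : ∀ y, ∑ i, Φ (a' i) y • a i = y) (z : 𝔤) (m : V) :
    casimirOperator (R := R) V a a' ⁅z, m⁆ = ⁅z, casimirOperator (R := R) V a a' m⁆ := by
  have hleft : ∑ i, ⁅⁅z, a i⁆, ⁅a' i, m⁆⁆ =
      ∑ j, ∑ i, Φ (a' j) ⁅z, a i⁆ • ⁅a j, ⁅a' i, m⁆⁆ := by
    rw [Finset.sum_comm]
    refine Finset.sum_congr rfl fun i _ ↦ ?_
    conv_lhs => rw [← h ⁅z, a i⁆, sum_lie]
    simp only [smul_lie]
  have hright : ∑ j, ⁅a j, ⁅⁅z, a' j⁆, m⁆⁆ =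
      ∑ j, ∑ i, Φ (a i) ⁅z, a' j⁆ • ⁅a j, ⁅a' i, m⁆⁆ := by
    refine Finset.sum_congr rfl fun j _ ↦ ?_
    conv_lhs => rw [← sum_smul_eq_of_dual_expansion hΦ hnd h ⁅z, a' j⁆, sum_lie, lie_sum]
    simp only [smul_lie, lie_smul]
  have hcoeff (i j : ι) : Φ (a' j) ⁅z, a i⁆ + Φ (a i) ⁅z, a' j⁆ = 0 := by
    rw [hΦ.eq (a i) ⁅z, a' j⁆, hinv, add_neg_cancel]
  have hcancel : ∑ i, (⁅⁅z, a i⁆, ⁅a' i, m⁆⁆ + ⁅a i, ⁅⁅z, a' i⁆, m⁆⁆) = 0 := by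
    rw [Finset.sum_add_distrib, hleft, hright]
    simp only [← Finset.sum_add_distrib, ← add_smul, hcoeff, zero_smul, Finset.sum_const_zero]
  rw [eq_comm, ← sub_eq_zero, ← hcancel, casimirOperator_apply, casimirOperator_apply, lie_sum,
    ← Finset.sum_sub_distrib]
  refine Finset.sum_congr rfl fun i _ ↦ ?_
  rw [leibniz_lie z (a i), leibniz_lie z (a' i), lie_add]
  abel

end CasimirOperator

section CartanWeylBasis

variable [FiniteDimensional ℂ L] {H : LieSubalgebra ℂ L} [H.IsCartanSubalgebra]

lemma isRoot_of_mem_root {β : Weight ℂ H L} (hβ : β ∈ H.root) : IsRoot H (β.toLinear ℂ H L) :=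
  isRoot_toLinear (by simpa using hβ)

lemma IsRoot.killingForm_eq_zero {χ : Dual ℂ H} (hχ : IsRoot H χ) {y : L}
    (hy : y ∈ rootSpace H ⇑χ) (h : H) : killingForm ℂ L h y = 0 :=
  killingForm_apply_eq_zero_of_mem_rootSpace_of_add_ne_zero ℂ L H (α := 0) (β := ⇑χ)
    (by rw [rootSpace_zero_eq]; exact h.2) hy (by simpa using hχ.1)

variable [IsKilling ℂ L]

variable (H) in
/-- The bilinear form on `𝔥*` transported from the Killing form: `⟨ν, ξ⟩ = ξ (t_ν)`, where
`t_ν ∈ 𝔥` represents `ν`. -/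
noncomputable def weightForm : LinearMap.BilinForm ℂ (Dual ℂ H) :=
  Dual.eval ℂ H ∘ₗ (IsKilling.cartanEquivDual H).symm.toLinearMap

lemma weightForm_apply (ν ξ : Dual ℂ H) :
    weightForm H ν ξ = ξ ((IsKilling.cartanEquivDual H).symm ν) :=
  rfl

lemma killingForm_cartanEquivDual_symm (ν : Dual ℂ H) (h : H) :
    killingForm ℂ L ((IsKilling.cartanEquivDual H).symm ν : L) (h : L) = ν h :=
  LinearMap.congr_fun ((IsKilling.cartanEquivDual H).apply_symm_apply ν) h

lemma weightForm_comm (ν ξ : Dual ℂ H) : weightForm H ν ξ = weightForm H ξ ν := by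
  rw [weightForm_apply, weightForm_apply, ← killingForm_cartanEquivDual_symm,
    ← killingForm_cartanEquivDual_symm]
  exact traceForm_comm ℂ L L _ _

lemma exists_killingForm_eq_one (β : Weight ℂ H L) :
    ∃ e ∈ rootSpace H ⇑β, ∃ f ∈ rootSpace H (-⇑β), killingForm ℂ L e f = 1 := by
  obtain ⟨e, he, he0⟩ := β.exists_ne_zero
  obtain ⟨f, hf, hef⟩ : ∃ f ∈ rootSpace H (-⇑β), killingForm ℂ L e f ≠ 0 := by
    contrapose! he0
    simpa using mem_ker_killingForm_of_mem_rootSpace_of_forall_rootSpace_neg ℂ L H he he0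
  exact ⟨e, he, (killingForm ℂ L e f)⁻¹ • f, Submodule.smul_mem _ _ hf, by simp [hef]⟩

variable (H) in
/-- A basis of `L` adapted to the root decomposition: a basis of `H` and a root vector for each
root. -/
noncomputable def cartanWeylBasis : Fin (finrank ℂ H) ⊕ H.root → L :=
  Sum.elim (fun i ↦ finBasis ℂ H i) fun β ↦ (exists_killingForm_eq_one β.1).choose

variable (H) in
/-- The basis dual to `cartanWeylBasis` for the Killing form. -/
noncomputable def cartanWeylDualBasis : Fin (finrank ℂ H) ⊕ H.root → L :=
  Sum.elim (fun i ↦ ((IsKilling.cartanEquivDual H).symm ((finBasis ℂ H).coord i) : H))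
    fun β ↦ (exists_killingForm_eq_one β.1).choose_spec.2.choose

lemma cartanWeylBasis_inr_mem (β : H.root) : cartanWeylBasis H (.inr β) ∈ rootSpace H ⇑β.1 :=
  (exists_killingForm_eq_one β.1).choose_spec.1

lemma cartanWeylDualBasis_inr_mem (β : H.root) :
    cartanWeylDualBasis H (.inr β) ∈ rootSpace H (-⇑β.1) :=
  (exists_killingForm_eq_one β.1).choose_spec.2.choose_spec.1

lemma killingForm_cartanWeylBasis_inr (β : H.root) :
    killingForm ℂ L (cartanWeylBasis H (.inr β)) (cartanWeylDualBasis H (.inr β)) = 1 :=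
  (exists_killingForm_eq_one β.1).choose_spec.2.choose_spec.2

lemma sum_killingForm_smul_cartanWeylBasis_of_mem_cartan (h : H) :
    ∑ i, killingForm ℂ L (cartanWeylDualBasis H i) (h : L) • cartanWeylBasis H i = h := by
  have hroot (β : H.root) : killingForm ℂ L (cartanWeylDualBasis H (.inr β)) (h : L) = 0 := by
    rw [killingForm, traceForm_comm]
    exact (isRoot_of_mem_root β.2).neg.killingForm_eq_zero (cartanWeylDualBasis_inr_mem β) h
  have hcartan : ∑ i, (finBasis ℂ H).repr h i • (finBasis ℂ H i : L) = h := by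
    conv_rhs => rw [← (finBasis ℂ H).sum_repr h]
    simp only [AddSubmonoidClass.coe_finsetSum, SetLike.val_smul]
  simp only [Fintype.sum_sum_type, hroot, zero_smul, Finset.sum_const_zero, add_zero]
  simpa only [cartanWeylDualBasis, cartanWeylBasis, Sum.elim_inl,
    killingForm_cartanEquivDual_symm, Basis.coord_apply] using hcartan

lemma sum_killingForm_smul_cartanWeylBasis_of_mem_rootSpace {χ : Dual ℂ H} (hχ : IsRoot H χ)
    {y : L} (hy : y ∈ rootSpace H ⇑χ) :
    ∑ i, killingForm ℂ L (cartanWeylDualBasis H i) y • cartanWeylBasis H i = y := by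
  let β₀ : Weight ℂ H L := ⟨⇑χ, hχ.2⟩
  have hβ₀ : β₀.IsNonZero := fun h0 ↦ hχ.1 (DFunLike.coe_injective h0)
  let γ : H.root := ⟨β₀, by simpa using hβ₀⟩
  have hother (β : H.root) (hβ : β ≠ γ) :
      killingForm ℂ L (cartanWeylDualBasis H (.inr β)) y = 0 :=
    killingForm_apply_eq_zero_of_mem_rootSpace_of_add_ne_zero ℂ L H
      (cartanWeylDualBasis_inr_mem β) hy fun h0 ↦
        hβ (Subtype.ext (DFunLike.coe_injective (neg_add_eq_zero.mp h0)))
  have hγ : killingForm ℂ L (cartanWeylDualBasis H (.inr γ)) y • cartanWeylBasis H (.inr γ) =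
      y := by
    have hne : (⟨_, cartanWeylBasis_inr_mem γ⟩ : rootSpace H ⇑γ.1) ≠ 0 := fun h0 ↦ by
      simpa [show cartanWeylBasis H (.inr γ) = 0 from congrArg Subtype.val h0] using
        killingForm_cartanWeylBasis_inr γ
    obtain ⟨c, hc⟩ := (finrank_eq_one_iff_of_nonzero' _ hne).mp
      (IsKilling.finrank_rootSpace_eq_one γ.1 hβ₀) ⟨y, hy⟩
    rw [← show c • cartanWeylBasis H (.inr γ) = y from congrArg Subtype.val hc, map_smul,
      killingForm, traceForm_comm]
    simp [killingForm_cartanWeylBasis_inr γ]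
  rw [Fintype.sum_sum_type, Finset.sum_eq_zero fun i _ ↦ ?_, zero_add,
    Fintype.sum_eq_single γ fun β hβ ↦ by rw [hother β hβ, zero_smul], hγ]
  exact smul_eq_zero_of_left (hχ.killingForm_eq_zero hy _) _

lemma sum_killingForm_smul_cartanWeylBasis (y : L) :
    ∑ i, killingForm ℂ L (cartanWeylDualBasis H i) y • cartanWeylBasis H i = y := by
  let T : End ℂ L :=
    ∑ i, (killingForm ℂ L (cartanWeylDualBasis H i)).smulRight (cartanWeylBasis H i)
  have hT (x : L) :
      T x = ∑ i, killingForm ℂ L (cartanWeylDualBasis H i) x • cartanWeylBasis H i := by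
    simp [T]
  suffices T.eqLocus LinearMap.id = ⊤ from
    (hT y).symm.trans (this.ge (Submodule.mem_top (x := y)))
  refine eq_top_of_cartan_le_of_rootSpace_le (H := H) (fun x hx ↦ ?_) fun χ hχ x hx ↦ ?_
  · exact (hT x).trans (sum_killingForm_smul_cartanWeylBasis_of_mem_cartan ⟨x, hx⟩)
  · exact (hT x).trans (sum_killingForm_smul_cartanWeylBasis_of_mem_rootSpace hχ hx)

end CartanWeylBasis

section CasimirValue

variable [FiniteDimensional ℂ L] [IsKilling ℂ L]
variable (H : LieSubalgebra ℂ L) [H.IsCartanSubalgebra] {r : ℕ} {α : Fin r → Dual ℂ H}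
variable (V : Type*) [AddCommGroup V] [Module ℂ V] [LieRingModule L V] [LieModule ℂ L V]

/-- The Casimir operator of the Killing form on the module `V`, computed in a basis adapted to
`H`. -/
noncomputable def casimir : V →ₗ⁅ℂ,L⁆ V where
  __ := casimirOperator (R := ℂ) V (cartanWeylBasis H) (cartanWeylDualBasis H)
  map_lie' {x m} := casimirOperator_lie ⟨traceForm_comm ℂ L L⟩
    (IsKilling.killingForm_nondegenerate ℂ L).1 (traceForm_lieInvariant ℂ L L)
    sum_killingForm_smul_cartanWeylBasis x m

variable {H V}

lemma casimir_apply (m : V) :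
    casimir H V m = ∑ i, ⁅cartanWeylBasis H i, ⁅cartanWeylDualBasis H i, m⁆⁆ :=
  casimirOperator_apply _ _ m

/-- The roots which are positive relative to `α`. -/
noncomputable def posRoots (α : Fin r → Dual ℂ H) : Finset (Weight ℂ H L) :=
  H.root.filter fun β ↦ IsPosRoot H α (β.toLinear ℂ H L)

/-- The sum `2ρ` of the positive roots. -/
noncomputable def twoRho (α : Fin r → Dual ℂ H) : Dual ℂ H :=
  ∑ β ∈ posRoots α, β.toLinear ℂ H L

/-- The scalar `⟨ν, ν + 2ρ⟩` by which the Casimir operator acts on highest weight vectors of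
weight `ν`. -/
noncomputable def casimirValue (α : Fin r → Dual ℂ H) (ν : Dual ℂ H) : ℂ :=
  weightForm H ν (ν + twoRho α)

lemma sum_coord_mul_apply_eq_weightForm (ν : Dual ℂ H) :
    ∑ i, ν ((IsKilling.cartanEquivDual H).symm ((finBasis ℂ H).coord i)) * ν (finBasis ℂ H i) =
      weightForm H ν ν := by
  have hν : ν = ∑ i, ν (finBasis ℂ H i) • (finBasis ℂ H).coord i :=
    ((finBasis ℂ H).sum_dual_apply_smul_coord ν).symm
  conv_rhs => rw [weightForm_apply]; enter [2]; rw [hν]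
  simp only [map_sum, map_smul, smul_eq_mul, mul_comm]

lemma IsHWVector.lie_lie_cartanWeylBasis_inr (hb : IsBase H α) {ν : Dual ℂ H} {v : V}
    (hv : IsHWVector H α ν v) (β : H.root) :
    ⁅cartanWeylBasis H (.inr β), ⁅cartanWeylDualBasis H (.inr β), v⁆⁆ =
      if IsPosRoot H α (β.1.toLinear ℂ H L) then
        weightForm H (β.1.toLinear ℂ H L) ν • v else 0 := by
  split_ifs with hβ
  · have hlie := IsKilling.lie_eq_killingForm_smul_of_mem_rootSpace_of_mem_rootSpace_neg
      (cartanWeylBasis_inr_mem β) (cartanWeylDualBasis_inr_mem β)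
    rw [killingForm_cartanWeylBasis_inr, one_smul] at hlie
    rw [leibniz_lie, hv.lie_eq_zero _ hβ _ (cartanWeylBasis_inr_mem β), lie_zero, add_zero, hlie]
    exact hv.lie_eq_smul _
  · have hneg : IsPosRoot H α (-β.1.toLinear ℂ H L) := by
      have hβ' := (hb.isPosRoot_or_isPosRoot_neg (isRoot_of_mem_root β.2)).resolve_left hβ
      simpa using hβ'.neg
    rw [hv.lie_eq_zero _ hneg _ (cartanWeylDualBasis_inr_mem β), lie_zero]

lemma IsHWVector.casimir_apply (hb : IsBase H α) {ν : Dual ℂ H} {v : V}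
    (hv : IsHWVector H α ν v) : casimir H V v = casimirValue α ν • v := by
  have hcartan : ∑ i, ⁅cartanWeylBasis H (.inl i), ⁅cartanWeylDualBasis H (.inl i), v⁆⁆ =
      weightForm H ν ν • v := by
    rw [← sum_coord_mul_apply_eq_weightForm, Finset.sum_smul]
    refine Finset.sum_congr rfl fun i _ ↦ ?_
    simp only [cartanWeylBasis, cartanWeylDualBasis, Sum.elim_inl, hv.lie_eq_smul, lie_smul,
      smul_smul]
  have hroot : ∑ β, ⁅cartanWeylBasis H (.inr β), ⁅cartanWeylDualBasis H (.inr β), v⁆⁆ =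
      weightForm H ν (twoRho α) • v := by
    simp only [hv.lie_lie_cartanWeylBasis_inr hb]
    rw [twoRho, map_sum, Finset.sum_smul, posRoots, Finset.sum_filter,
      ← Finset.sum_coe_sort (s := H.root)]
    simp only [weightForm_comm ν]
  rw [AdjPaper.casimir_apply, Fintype.sum_sum_type, hcartan, hroot, ← add_smul, ← map_add,
    casimirValue]

end CasimirValue

section FundamentalCoweights

variable {K E ι : Type*} [Field K] [AddCommGroup E] [Module K E]
variable [DecidableEq ι]

lemma exists_dual_family_of_linearIndependent [Finite ι] [IsReflexive K E]
    {α : ι → Dual K E} (hα : LinearIndependent K α) :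
    ∃ t : ι → E, ∀ i j, α i (t j) = if i = j then 1 else 0 := by
  cases nonempty_fintype ι
  obtain ⟨g, hg⟩ := LinearMap.exists_leftInverse_of_injective (Fintype.linearCombination K α)
    (LinearMap.ker_eq_bot.mpr hα.fintypeLinearCombination_injective)
  refine ⟨fun j ↦ (evalEquiv K E).symm (LinearMap.proj j ∘ₗ g), fun i j ↦ ?_⟩
  have hgi := LinearMap.congr_fun hg (Pi.single i 1)
  rw [LinearMap.comp_apply, Fintype.linearCombination_apply_single, one_smul] at hgi
  rw [apply_evalEquiv_symm_apply, LinearMap.comp_apply, hgi]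
  simp [Pi.single_apply, eq_comm]

lemma natCombination_apply_dual [Fintype ι] {α : ι → Dual K E} {t : ι → E}
    (ht : ∀ i j, α i (t j) = if i = j then 1 else 0) (k : ι → ℕ) (j : ι) :
    natCombination α k (t j) = k j := by
  simp [natCombination_apply, ht]

end FundamentalCoweights

section TwoRho

variable {H : LieSubalgebra ℂ L} [H.IsCartanSubalgebra] {r : ℕ} {α : Fin r → Dual ℂ H}
variable {t : Fin r → H}

lemma IsBase.isPosRoot_of_apply_eq (hb : IsBase H α)
    (ht : ∀ i j, α i (t j) = if i = j then 1 else 0) {χ ξ : Dual ℂ H} (hχ : IsRoot H χ)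
    (hξ : IsPosRoot H α ξ) {j : Fin r} (hj : ξ (t j) ≠ 0) (hχξ : χ (t j) = ξ (t j)) :
    IsPosRoot H α χ := by
  refine (hb.isPosRoot_or_isPosRoot_neg hχ).resolve_right fun hneg ↦ ?_
  obtain ⟨k, -, rfl⟩ := hξ.exists_eq_natCombination
  obtain ⟨l, -, rfl⟩ := hneg.exists_eq_natCombination
  simp only [natCombination_neg, LinearMap.neg_apply, natCombination_apply_dual ht] at hχξ hj
  have hkl : ((k j + l j : ℕ) : ℂ) = 0 := by
    push_cast
    rw [← hχξ, neg_add_cancel]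
  exact hj (by exact_mod_cast (Nat.add_eq_zero_iff.mp (by exact_mod_cast hkl)).1)

variable [FiniteDimensional ℂ L]

lemma mem_posRoots {β : Weight ℂ H L} : β ∈ posRoots α ↔ IsPosRoot H α (β.toLinear ℂ H L) := by
  refine ⟨fun h ↦ (Finset.mem_filter.mp h).2, fun h ↦ Finset.mem_filter.mpr ⟨?_, h⟩⟩
  simpa using h.1.1

variable [IsKilling ℂ L]

lemma IsPosRoot.exists_apply_ne_zero (hb : IsBase H α)
    (ht : ∀ i j, α i (t j) = if i = j then 1 else 0) {ξ : Dual ℂ H} (hξ : IsPosRoot H α ξ)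
    {i : Fin r} (hi : ξ ≠ α i) : ∃ j ≠ i, ξ (t j) ≠ 0 := by
  by_contra! hzero
  obtain ⟨k, -, hk⟩ := hξ.exists_eq_natCombination
  have hkj (j : Fin r) (hj : j ≠ i) : k j = 0 := by
    simpa [hk, natCombination_apply_dual ht] using hzero j hj
  have hξi : ξ = (k i : ℂ) • α i := by
    rw [hk, natCombination_apply, Fintype.sum_eq_single i fun j hj ↦ by rw [hkj j hj, zero_smul],
      Nat.cast_smul_eq_nsmul]
  let β : Weight ℂ H L := ⟨⇑ξ, hξ.1.2⟩
  let γ : Weight ℂ H L := ⟨⇑(α i), (hb.isRoot i).2⟩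
  have hβ : β.IsNonZero := fun h0 ↦ hξ.1.1 (DFunLike.coe_injective h0)
  rcases IsKilling.eq_neg_or_eq_of_eq_smul γ β hβ (k i) (congrArg DFunLike.coe hξi) with h | h
  · have hneg : ξ = -α i := by
      rw [show ξ = β.toLinear ℂ H L from rfl, h, Weight.toLinear_neg]
      rfl
    exact hξ.not_isPosRoot_neg hb.indep (hneg ▸ (hb.isPosRoot_simple i).neg)
  · exact hi (DFunLike.coe_injective (congrArg DFunLike.coe h :))

lemma IsCoroot.eq_coroot {χ : Dual ℂ H} (hχ : IsRoot H χ) {t : H} (ht : IsCoroot H χ t) :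
    t = IsKilling.coroot (⟨⇑χ, hχ.2⟩ : Weight ℂ H L) := by
  obtain ⟨hχt, e, he, f, hf, hef⟩ := ht
  refine IsKilling.eq_coroot_of_mem_corootSpace_of_two _ ?_ hχt
  rw [mem_corootSpace]
  exact Submodule.subset_span ⟨e, he, f, hf, hef.symm⟩

lemma IsBase.reflectRoot_mem_posRoots_erase (hb : IsBase H α) {i : Fin r} {β γ : Weight ℂ H L}
    (hγ : γ.toLinear ℂ H L = α i) (hβ : β ∈ (posRoots α).erase γ) :
    IsKilling.reflectRoot γ β ∈ (posRoots α).erase γ := by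
  obtain ⟨t, ht⟩ := exists_dual_family_of_linearIndependent hb.indep
  obtain ⟨hβγ, hβ⟩ := Finset.mem_erase.mp hβ
  rw [mem_posRoots] at hβ
  have hne : β.toLinear ℂ H L ≠ α i := fun h ↦
    hβγ (DFunLike.coe_injective (congrArg DFunLike.coe (h.trans hγ.symm) :))
  obtain ⟨j, hji, hj⟩ := hβ.exists_apply_ne_zero hb ht hne
  have hγj : γ (t j) = 0 := by
    simpa [hji.symm] using (LinearMap.congr_fun hγ (t j)).trans (ht i j)
  have hsβ : IsKilling.reflectRoot γ β (t j) = β (t j) := by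
    rw [show IsKilling.reflectRoot γ β (t j) =
      β (t j) - β (IsKilling.coroot γ) * γ (t j) from rfl, hγj, mul_zero, sub_zero]
  have hroot : (IsKilling.reflectRoot γ β).IsNonZero :=
    IsKilling.reflectRoot_isNonZero γ β (by simpa using hβ.1.1)
  refine Finset.mem_erase.mpr ⟨fun h ↦ hj ?_, mem_posRoots.mpr ?_⟩
  · rw [Weight.toLinear_apply, ← hsβ, h, hγj]
  · exact hb.isPosRoot_of_apply_eq ht (isRoot_toLinear hroot) hβ hj hsβ

/-- The simple reflection permutes the positive roots other than `α_i`, so that it maps `2ρ` to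
`2ρ - 2 α_i`. -/
lemma twoRho_apply_coroot (hb : IsBase H α) {i : Fin r} {t : H} (ht : IsCoroot H (α i) t) :
    twoRho α t = 2 := by
  let γ : Weight ℂ H L := ⟨⇑(α i), (hb.isRoot i).2⟩
  have hγt : γ t = 2 := ht.1
  have hs (β : Weight ℂ H L) (x : H) : IsKilling.reflectRoot γ β x = β x - β t * γ x := by
    rw [ht.eq_coroot (hb.isRoot i)]
    rfl
  suffices ∑ β ∈ (posRoots α).erase γ, β.toLinear ℂ H L t = 0 by
    rw [twoRho, LinearMap.sum_apply,
      ← Finset.add_sum_erase _ _ (mem_posRoots.mpr (hb.isPosRoot_simple i) : γ ∈ posRoots α),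
      this, add_zero]
    exact hγt
  refine Finset.sum_involution (fun β _ ↦ IsKilling.reflectRoot γ β) (fun β _ ↦ ?_)
    (fun β _ hβ h ↦ hβ ?_) (fun β hβ ↦ hb.reflectRoot_mem_posRoots_erase rfl hβ) fun β _ ↦ ?_
  · simp only [Weight.toLinear_apply, hs, hγt]
    ring
  · have hβt := DFunLike.congr_fun h t
    rw [hs, hγt] at hβt
    rw [Weight.toLinear_apply]
    linear_combination (-1 / 2 : ℂ) * hβt
  · ext x
    simp only [hs, hγt]
    ring

end TwoRho

section CasimirValueComparison

variable [FiniteDimensional ℂ L] [IsKilling ℂ L]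
variable {H : LieSubalgebra ℂ L} [H.IsCartanSubalgebra] {r : ℕ} {α : Fin r → Dual ℂ H}

lemma IsCoroot.exists_killingForm_self {χ : Dual ℂ H} (hχ : IsRoot H χ) {t : H}
    (ht : IsCoroot H χ t) : ∃ q : ℝ, 0 ≤ q ∧ killingForm ℂ L (t : L) (t : L) = q := by
  let γ : Weight ℂ H L := ⟨⇑χ, hχ.2⟩
  let n (β : Weight ℂ H L) : ℤ := chainBotCoeff γ β - chainTopCoeff γ β
  have hn (β : Weight ℂ H L) : β.toLinear ℂ H L t = n β := by
    rw [Weight.toLinear_apply, ht.eq_coroot hχ, IsKilling.apply_coroot_eq_cast]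
  have hsum : killingForm ℂ L (t : L) (t : L) =
      ∑ β ∈ H.root, β.toLinear ℂ H L t * β.toLinear ℂ H L t := by
    have h := LinearMap.congr_fun₂ (IsKilling.restrict_killingForm_eq_sum (K := ℂ) (H := H)) t t
    exact h.trans (by simp only [LinearMap.sum_apply, LinearMap.smulRight_apply,
      LinearMap.smul_apply, smul_eq_mul])
  refine ⟨∑ β ∈ H.root, (n β : ℝ) ^ 2, Finset.sum_nonneg fun _ _ ↦ sq_nonneg _, ?_⟩
  simp [hsum, hn, sq]

lemma IsCoroot.exists_cartanEquivDual_symm_eq_smul {χ : Dual ℂ H} (hχ : IsRoot H χ) {t : H}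
    (ht : IsCoroot H χ t) :
    ∃ s : ℝ, 0 < s ∧ (IsKilling.cartanEquivDual H).symm χ = (s : ℂ) • t := by
  let γ : Weight ℂ H L := ⟨⇑χ, hχ.2⟩
  obtain ⟨q, hq, htt⟩ := ht.exists_killingForm_self hχ
  obtain ⟨c, hc⟩ : ∃ c : ℂ, (IsKilling.cartanEquivDual H).symm χ = c • t := by
    have h0 : χ ((IsKilling.cartanEquivDual H).symm χ) ≠ 0 :=
      IsKilling.root_apply_cartanEquivDual_symm_ne_zero (α := γ)
        fun h0 ↦ hχ.1 (DFunLike.coe_injective h0)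
    have hcoroot : t = (2 * (χ ((IsKilling.cartanEquivDual H).symm χ))⁻¹) •
        (IsKilling.cartanEquivDual H).symm χ := by
      rw [ht.eq_coroot hχ, IsKilling.coroot, ← ofNat_smul_eq_nsmul ℂ 2, smul_smul]
      rfl
    refine ⟨χ ((IsKilling.cartanEquivDual H).symm χ) / 2, ?_⟩
    rw [hcoroot, smul_smul, ← mul_assoc, div_mul_cancel₀ _ two_ne_zero, mul_inv_cancel₀ h0,
      one_smul]
  have hcq : c * q = 2 := by
    rw [← htt, ← ht.1, ← killingForm_cartanEquivDual_symm χ t, hc]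
    simp
  have hq0 : q ≠ 0 := by
    rintro rfl
    simp at hcq
  refine ⟨2 / q, by positivity, ?_⟩
  rw [hc, eq_div_of_mul_eq (by exact_mod_cast hq0) hcq]
  simp

lemma IsBase.exists_weightForm_eq (hb : IsBase H α) {hc : Fin r → H}
    (hco : ∀ j, IsCoroot H (α j) (hc j)) :
    ∃ s : Fin r → ℝ, (∀ i, 0 < s i) ∧
      ∀ k ξ, weightForm H (natCombination α k) ξ = ∑ i, k i * (s i * ξ (hc i)) := by
  choose s hs hα using fun i ↦ (hco i).exists_cartanEquivDual_symm_eq_smul (hb.isRoot i)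
  refine ⟨s, hs, fun k ξ ↦ ?_⟩
  simp [natCombination_apply, weightForm_apply, hα]

lemma casimirValue_add_sub (ν κ : Dual ℂ H) :
    casimirValue α (ν + κ) - casimirValue α ν = weightForm H κ (ν + κ + ν + twoRho α) := by
  simp only [casimirValue, map_add, LinearMap.add_apply, weightForm_comm ν κ]
  ring

lemma IsBase.eq_zero_of_casimirValue_eq (hb : IsBase H α) {hc : Fin r → H}
    (hco : ∀ j, IsCoroot H (α j) (hc j)) {μ ν : Dual ℂ H} (hμ : IsDomInt hc μ)
    (hν : IsDomInt hc ν) {k : Fin r → ℕ} (hk : μ = ν + natCombination α k)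
    (hcas : casimirValue α μ = casimirValue α ν) : k = 0 := by
  obtain ⟨s, hs, hform⟩ := hb.exists_weightForm_eq hco
  choose m hm using hμ
  choose n hn using hν
  have hsum : ∑ i, (k i : ℝ) * (s i * (m i + n i + 2)) = 0 := by
    have h := casimirValue_add_sub (α := α) ν (natCombination α k)
    rw [← hk, hcas, sub_self, hform] at h
    simp only [LinearMap.add_apply, hm, hn, twoRho_apply_coroot hb (hco _)] at h
    exact_mod_cast h.symm
  funext i
  have hpos (i : Fin r) : 0 < s i * (m i + n i + 2) := mul_pos (hs i) (by positivity)
  have hterm := (Finset.sum_eq_zero_iff_of_nonneg fun i _ ↦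
    mul_nonneg (Nat.cast_nonneg (k i)) (hpos i).le).mp hsum i (Finset.mem_univ i)
  exact_mod_cast (mul_eq_zero.mp hterm).resolve_right (hpos i).ne'

lemma twoRho_neg (α : Fin r → Dual ℂ H) : twoRho (-α) = -twoRho α := by
  rw [twoRho, twoRho, ← Finset.sum_neg_distrib]
  refine Finset.sum_nbij' Neg.neg Neg.neg (fun β hβ ↦ ?_) (fun β hβ ↦ ?_) (fun β _ ↦ neg_neg β)
    (fun β _ ↦ neg_neg β) fun β _ ↦ by simp
  · rw [mem_posRoots] at hβ ⊢
    simpa using hβ.neg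
  · rw [mem_posRoots] at hβ ⊢
    simpa using hβ.neg

lemma casimirValue_neg_neg (α : Fin r → Dual ℂ H) (ν : Dual ℂ H) :
    casimirValue (-α) (-ν) = casimirValue α ν := by
  simp only [casimirValue, twoRho_neg, map_neg, LinearMap.neg_apply, ← neg_add, neg_neg]

end CasimirValueComparison

section CartanComponent

variable [FiniteDimensional ℂ L] [IsKilling ℂ L]
variable {H : LieSubalgebra ℂ L} [H.IsCartanSubalgebra] {r : ℕ} {α : Fin r → Dual ℂ H}
variable {V : Type*} [AddCommGroup V] [Module ℂ V] [LieRingModule L V] [LieModule ℂ L V]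

lemma casimir_apply_of_mem_lieSpan {c : ℂ} {v m : V} (hv : casimir H V v = c • v)
    (hm : m ∈ LieSubmodule.lieSpan ℂ L {v}) : casimir H V m = c • m := by
  have hle : LieSubmodule.lieSpan ℂ L {v} ≤ (casimir H V - c • LieModuleHom.id).ker := by
    rw [LieSubmodule.lieSpan_le, Set.singleton_subset_iff]
    simp [hv]
  simpa [sub_eq_zero] using hle hm

variable [FiniteDimensional ℂ V] {μ : Dual ℂ H} {hc : Fin r → H}

lemma IsHWVector.mem_of_casimir_apply (hb : IsBase H α) (hco : ∀ j, IsCoroot H (α j) (hc j))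
    {u : V} (hu : IsHWVector H α μ u) {N : LieSubmodule ℂ L V} (hN : N ≠ ⊥)
    (hle : N.toSubmodule ≤ lowerHull α μ u)
    (hcas : ∀ m ∈ N, casimir H V m = casimirValue α μ • m) : u ∈ N := by
  obtain ⟨ν, n, hnN, hn⟩ := hb.exists_isHWVector_mem (α := α) hN
  have hvalue : casimirValue α μ = casimirValue α ν :=
    smul_left_injective ℂ hn.ne_zero ((hcas n hnN).symm.trans (hn.casimir_apply hb))
  obtain ⟨k, hk⟩ := exists_eq_add_natCombination_of_mem_lowerHull hn.ne_zero
    hu.mem_weightSpace hn.mem_weightSpace (hle hnN)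
  obtain rfl : k = 0 :=
    hb.eq_zero_of_casimirValue_eq hco (hu.isDomInt hb hco) (hn.isDomInt hb hco) hk hvalue
  obtain rfl : μ = ν := by simpa using hk
  obtain ⟨c, rfl⟩ := Submodule.mem_span_singleton.mp <|
    mem_span_singleton_of_mem_lowerHull hb.indep hu.mem_weightSpace hn.mem_weightSpace (hle hnN)
  have hc0 : c ≠ 0 := fun h ↦ hn.ne_zero (by simp [h])
  simpa [smul_smul, inv_mul_cancel₀ hc0] using N.smul_mem c⁻¹ hnN

lemma IsHWVector.eq_bot_or_mem_of_le_lieSpan (hb : IsBase H α)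
    (hco : ∀ j, IsCoroot H (α j) (hc j)) {v : V} (hv : IsHWVector H α μ v)
    {N : LieSubmodule ℂ L V} (hN : N ≤ LieSubmodule.lieSpan ℂ L {v}) : N = ⊥ ∨ v ∈ N :=
  or_iff_not_imp_left.mpr fun h0 ↦ hv.mem_of_casimir_apply hb hco h0
    (le_trans hN (hv.lieSpan_le_lowerHull hb)) fun _ hm ↦
      casimir_apply_of_mem_lieSpan (hv.casimir_apply hb) (hN hm)

lemma IsHWVector.mem_lieSpan_of_isHWVector_neg (hb : IsBase H α)
    (hco : ∀ j, IsCoroot H (α j) (hc j)) {w u : V} (hw : IsHWVector H α μ w)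
    (hu : IsHWVector H (-α) (-μ) u) (htop : lowerHull (-α) (-μ) u = ⊤) :
    u ∈ LieSubmodule.lieSpan ℂ L {w} := by
  have hspan : LieSubmodule.lieSpan ℂ L {w} ≠ ⊥ := fun h ↦
    hw.ne_zero ((LieSubmodule.lieSpan_eq_bot_iff ℂ L V).mp h w rfl)
  refine hu.mem_of_casimir_apply hb.neg (hc := -hc) (fun j ↦ (hco j).neg) hspan
    (htop ▸ le_top) fun m hm ↦ ?_
  rw [casimirValue_neg_neg]
  exact casimir_apply_of_mem_lieSpan (hw.casimir_apply hb) hm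

end CartanComponent

section Product

variable {R 𝔤 M N : Type*} [LieRing 𝔤] [AddCommGroup M] [LieRingModule 𝔤 M]
variable [AddCommGroup N] [LieRingModule 𝔤 N]

instance prodLieRingModule : LieRingModule 𝔤 (M × N) where
  bracket x m := (⁅x, m.1⁆, ⁅x, m.2⁆)
  add_lie x y m := by ext <;> simp
  lie_add x m n := by ext <;> simp
  leibniz_lie x y m := by ext <;> exact leibniz_lie _ _ _

@[simp]
lemma lie_fst (x : 𝔤) (m : M × N) : ⁅x, m⁆.1 = ⁅x, m.1⁆ := rfl

@[simp]
lemma lie_snd (x : 𝔤) (m : M × N) : ⁅x, m⁆.2 = ⁅x, m.2⁆ := rfl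

variable [CommRing R] [Module R M] [Module R N]

variable (R 𝔤 M N) in
/-- The first projection of a product of Lie modules. -/
def fstLieModuleHom : M × N →ₗ⁅R,𝔤⁆ M :=
  { LinearMap.fst R M N with map_lie' := rfl }

@[simp]
lemma fstLieModuleHom_apply (m : M × N) : fstLieModuleHom R 𝔤 M N m = m.1 := rfl

variable [LieAlgebra R 𝔤] [LieModule R 𝔤 M] [LieModule R 𝔤 N]

instance prodLieModule : LieModule R 𝔤 (M × N) where
  smul_lie t x m := by ext <;> simp
  lie_smul t x m := by ext <;> simp

end Product

section Embedding

variable {H : LieSubalgebra ℂ L} [H.IsCartanSubalgebra] {r : ℕ} {α : Fin r → Dual ℂ H}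
variable {V W : Type*} [AddCommGroup V] [Module ℂ V] [LieRingModule L V] [LieModule ℂ L V]
variable [AddCommGroup W] [Module ℂ W] [LieRingModule L W] [LieModule ℂ L W]

lemma IsHWVector.prodMk {μ : Dual ℂ H} {v : V} {w : W} (hv : IsHWVector H α μ v)
    (hw : IsHWVector H α μ w) : IsHWVector H α μ (v, w) where
  ne_zero h := hv.ne_zero (congrArg Prod.fst h)
  mem_weightSpace := (LieModule.mem_weightSpace _ _).mpr fun x ↦
    Prod.ext (hv.lie_eq_smul x) (hw.lie_eq_smul x)
  lie_eq_zero χ hχ e he := Prod.ext (hv.lie_eq_zero χ hχ e he) (hw.lie_eq_zero χ hχ e he)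

variable [FiniteDimensional ℂ L] [IsKilling ℂ L]

/-- The embedding is the Lie submodule of `V × W` generated by `(v, w)`, which is the graph of a
morphism because its intersection with `0 × W` is a submodule missing its generator. -/
lemma IsHWVector.exists_lieModuleHom_apply_eq [FiniteDimensional ℂ V] [FiniteDimensional ℂ W]
    [LieModule.IsIrreducible ℂ L V] (hb : IsBase H α) {hc : Fin r → H}
    (hco : ∀ j, IsCoroot H (α j) (hc j)) {μ : Dual ℂ H} {v : V} {w : W}
    (hv : IsHWVector H α μ v) (hw : IsHWVector H α μ w) : ∃ ι : V →ₗ⁅ℂ,L⁆ W, ι v = w := by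
  let D : LieSubmodule ℂ L (V × W) := LieSubmodule.lieSpan ℂ L {(v, w)}
  have hvw : (v, w) ∈ D := LieSubmodule.subset_lieSpan rfl
  have hker : D ⊓ (fstLieModuleHom ℂ L V W).ker = ⊥ :=
    ((hv.prodMk hw).eq_bot_or_mem_of_le_lieSpan hb hco inf_le_left).resolve_right fun h ↦
      hv.ne_zero (by simpa using h.2)
  have hinj : Function.Injective (Prod.fst ∘ D.toSubmodule.subtype) := by
    intro d d' hd
    have hmem : (d - d' : V × W) ∈ D ⊓ (fstLieModuleHom ℂ L V W).ker :=
      ⟨sub_mem d.2 d'.2, by simpa [sub_eq_zero] using hd⟩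
    rw [hker] at hmem
    exact Subtype.ext (sub_eq_zero.mp (by simpa using hmem))
  have hsurj : Function.Surjective (Prod.fst ∘ D.toSubmodule.subtype) := fun a ↦ by
    have htop : D.map (fstLieModuleHom ℂ L V W) = ⊤ :=
      lieSubmodule_eq_top_of_mem ((LieSubmodule.mem_map _).mpr ⟨(v, w), hvw, rfl⟩) hv.ne_zero
    obtain ⟨d, hd, rfl⟩ := (LieSubmodule.mem_map a).mp (htop ▸ LieSubmodule.mem_top a)
    exact ⟨⟨d, hd⟩, rfl⟩
  obtain ⟨f, hf⟩ := Submodule.exists_eq_graph ⟨hinj, hsurj⟩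
  have hmemD (m : V × W) : m ∈ D ↔ m.2 = f m.1 := by
    rw [← LinearMap.mem_graph_iff, ← hf, LieSubmodule.mem_toSubmodule]
  refine ⟨{ f with map_lie' := fun {x a} ↦ ?_ }, ((hmemD _).mp hvw).symm⟩
  exact ((hmemD _).mp (D.lie_mem (x := x) ((hmemD (a, f a)).mpr rfl))).symm

end Embedding

section InvariantForms

variable {K 𝔤 M : Type*} [Field K] [LieRing 𝔤] [LieAlgebra K 𝔤]
variable [AddCommGroup M] [Module K M] [LieRingModule 𝔤 M] [LieModule K 𝔤 M]
variable [LieModule.IsIrreducible K 𝔤 M] {B B' : LinearMap.BilinForm K M}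

lemma lieInvariant_eq_zero_of_apply_eq_zero (hB : B.lieInvariant 𝔤) {m : M} (hm0 : m ≠ 0)
    (hm : B m = 0) : B = 0 := by
  let f := maxTrivLinearMapEquivLieModuleHom (R := K) (L := 𝔤) ⟨B, B.lieInvariant_iff.mp hB⟩
  have hker : f.ker = ⊤ := lieSubmodule_eq_top_of_mem (m := m) hm hm0
  exact LinearMap.ext fun a ↦ (hker ▸ LieSubmodule.mem_top a : a ∈ f.ker)

variable [FiniteDimensional K M]

lemma lieInvariant_nondegenerate (hB : B.lieInvariant 𝔤) (h0 : B ≠ 0) : B.Nondegenerate :=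
  LinearMap.BilinForm.Nondegenerate.ofSeparatingLeft fun m hm ↦ by
    by_contra hm0
    exact h0 (lieInvariant_eq_zero_of_apply_eq_zero hB hm0 (LinearMap.ext hm))

variable [IsAlgClosed K]

/-- Schur's lemma for invariant forms: `B⁻¹ B'` has an eigenvalue `c`, so `B' - c B` is an invariant
form with nontrivial kernel. -/
lemma lieInvariant_exists_eq_smul (hB : B.lieInvariant 𝔤) (hnd : B.Nondegenerate)
    (hB' : B'.lieInvariant 𝔤) : ∃ c : K, B' = c • B := by
  have : Nontrivial M :=
    (LieSubmodule.nontrivial_iff K 𝔤 M).mp inferInstance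
  obtain ⟨c, hc⟩ := Module.End.exists_eigenvalue ((B.toDual hnd).symm.toLinearMap ∘ₗ B')
  obtain ⟨m, hm⟩ := hc.exists_hasEigenvector
  have hm' : B' m = c • B m := by
    simpa [LinearEquiv.symm_apply_eq, LinearMap.ext_iff, LinearMap.BilinForm.toDual_def]
      using hm.apply_eq_smul
  have hinv : (B' - c • B).lieInvariant 𝔤 := fun x a b ↦ by
    simp only [LinearMap.sub_apply, LinearMap.smul_apply, hB x a b, hB' x a b, smul_neg]
    abel
  refine ⟨c, sub_eq_zero.mp (lieInvariant_eq_zero_of_apply_eq_zero hinv hm.2 ?_)⟩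
  simp [hm']

lemma lieInvariant_exists_flip_eq_smul (hB : B.lieInvariant 𝔤) (h0 : B ≠ 0) :
    ∃ ε : ℤˣ, B.flip = ε • B := by
  have hflip : B.flip.lieInvariant 𝔤 := fun x a b ↦ by simp [hB x b a]
  obtain ⟨c, hc⟩ := lieInvariant_exists_eq_smul hB (lieInvariant_nondegenerate hB h0) hflip
  have hflip_apply (a b : M) : B b a = c * B a b := LinearMap.congr_fun₂ hc a b
  have hc2 : (c * c) • B = (1 : K) • B := LinearMap.ext₂ fun a b ↦ by
    simp only [LinearMap.smul_apply, smul_eq_mul, mul_assoc, one_mul, ← hflip_apply]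
  have hcc : c * c = 1 := smul_left_injective K (M := LinearMap.BilinForm K M) h0 hc2
  rcases mul_self_eq_one_iff.mp hcc with rfl | rfl
  · exact ⟨1, LinearMap.ext₂ fun a b ↦ by simpa using hflip_apply a b⟩
  · exact ⟨-1, LinearMap.ext₂ fun a b ↦ by simpa using hflip_apply a b⟩

end InvariantForms

section LowestWeight

variable [FiniteDimensional ℂ L] [IsKilling ℂ L]
variable {H : LieSubalgebra ℂ L} [H.IsCartanSubalgebra] {r : ℕ} {α : Fin r → Dual ℂ H}
variable {V : Type*} [AddCommGroup V] [Module ℂ V] [LieRingModule L V] [LieModule ℂ L V]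
variable [FiniteDimensional ℂ V] [LieModule.IsIrreducible ℂ L V]

lemma IsHWVector.exists_isHWVector_neg (hb : IsBase H α) {B : LinearMap.BilinForm ℂ V}
    (hB : B.lieInvariant L) (h0 : B ≠ 0) {μ : Dual ℂ H} {v : V} (hv : IsHWVector H α μ v) :
    ∃ u, IsHWVector H (-α) (-μ) u ∧ B v u ≠ 0 := by
  have : Nontrivial V := ⟨v, 0, hv.ne_zero⟩
  obtain ⟨ν, u, hu⟩ := hb.neg.exists_isHWVector (V := V)
  have hvu : B v u ≠ 0 := fun hvu ↦ by
    have hle : (LieSubmodule.lieSpan ℂ L {v}).toSubmodule ≤ LinearMap.ker (B.flip u) :=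
      hv.lieSpan_le hb hvu fun χ hχ f hf m _ ↦ by
        rw [LinearMap.mem_ker, LinearMap.BilinForm.flip_apply, hB, hu.lie_eq_zero χ hχ f hf,
          map_zero, neg_zero]
    have hspan : LieSubmodule.lieSpan ℂ L {v} = ⊤ :=
      lieSubmodule_eq_top_of_mem (LieSubmodule.subset_lieSpan rfl) hv.ne_zero
    rw [hspan] at hle
    exact hu.ne_zero ((lieInvariant_nondegenerate hB h0).2 u fun w ↦ hle (LieSubmodule.mem_top w))
  obtain rfl : ν = -μ := by
    ext h
    have hinv := hB (h : L) v u
    rw [hv.lie_eq_smul, hu.lie_eq_smul, map_smul, map_smul, LinearMap.smul_apply, ← neg_smul]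
      at hinv
    exact (neg_eq_iff_eq_neg.mp (smul_left_injective ℂ hvu hinv.symm))
  exact ⟨u, hu, hvu⟩

end LowestWeight

section TensorProduct

variable {K 𝔥 : Type*} [Field K] [LieRing 𝔥] [LieAlgebra K 𝔥]
variable {V W : Type*} [AddCommGroup V] [Module K V] [LieRingModule 𝔥 V] [LieModule K 𝔥 V]
variable [AddCommGroup W] [Module K W] [LieRingModule 𝔥 W] [LieModule K 𝔥 W]
variable {μ ν : Dual K 𝔥} {v : V} {w : W}

lemma tmul_ne_zero (hv : v ≠ 0) (hw : w ≠ 0) : v ⊗ₜ[K] w ≠ 0 := by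
  obtain ⟨f, hf⟩ := not_forall.mp (mt (forall_dual_apply_eq_zero_iff K v).mp hv)
  obtain ⟨g, hg⟩ := not_forall.mp (mt (forall_dual_apply_eq_zero_iff K w).mp hw)
  exact fun h ↦ mul_ne_zero hf hg (by
    simpa using congrArg (TensorProduct.dualDistrib K V W (f ⊗ₜ g)) h)

lemma tmul_mem_weightSpace (hv : v ∈ weightSpace V ⇑μ) (hw : w ∈ weightSpace W ⇑ν) :
    v ⊗ₜ[K] w ∈ weightSpace (V ⊗[K] W) ⇑(μ + ν) := by
  rw [mem_weightSpace] at *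
  intro h
  rw [TensorProduct.LieModule.lie_tmul_right, hv, hw, TensorProduct.tmul_smul,
    ← TensorProduct.smul_tmul', LinearMap.add_apply, add_smul]

variable {ι : Type*} [Fintype ι] {α : ι → Dual K 𝔥}

lemma lowerHull_tmul_eq_top (hv : v ∈ weightSpace V ⇑μ) (hw : w ∈ weightSpace W ⇑ν)
    (hvtop : lowerHull α μ v = ⊤) (hwtop : lowerHull α ν w = ⊤) :
    lowerHull α (μ + ν) (v ⊗ₜ[K] w) = ⊤ := by
  have htmul (k l : ι → ℕ) (hkl : k + l ≠ 0)
      (a : V) (ha : a ∈ weightSpace V ⇑(μ - natCombination α k))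
      (b : W) (hb : b ∈ weightSpace W ⇑(ν - natCombination α l)) :
      a ⊗ₜ[K] b ∈ lowerHull α (μ + ν) (v ⊗ₜ[K] w) := by
    refine mem_lowerHull_of_mem_weightSpace hkl ?_
    rw [map_add, add_sub_add_comm]
    exact tmul_mem_weightSpace ha hb
  have hv' : v ∈ weightSpace V ⇑(μ - natCombination α 0) := by simpa using hv
  have hw' : w ∈ weightSpace W ⇑(ν - natCombination α 0) := by simpa using hw
  have hleft (b : W) : v ⊗ₜ[K] b ∈ lowerHull α (μ + ν) (v ⊗ₜ[K] w) := by
    have hle : lowerHull α ν w ≤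
        (lowerHull α (μ + ν) (v ⊗ₜ[K] w)).comap (TensorProduct.mk K V W v) :=
      lowerHull_le (self_mem_lowerHull _ _ _) fun l hl ↦ htmul 0 l (by simpa using hl) v hv'
    exact hle (hwtop ▸ Submodule.mem_top)
  have hright (k : ι → ℕ) (hk : k ≠ 0) (a : V) (ha : a ∈ weightSpace V ⇑(μ - natCombination α k))
      (b : W) : a ⊗ₜ[K] b ∈ lowerHull α (μ + ν) (v ⊗ₜ[K] w) := by
    have hle : lowerHull α ν w ≤
        (lowerHull α (μ + ν) (v ⊗ₜ[K] w)).comap (TensorProduct.mk K V W a) :=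
      lowerHull_le (htmul k 0 (by simpa using hk) a ha w hw')
        fun l _ ↦ htmul k l (fun h ↦ hk (add_eq_zero.mp h).1) a ha
    exact hle (hwtop ▸ Submodule.mem_top)
  rw [eq_top_iff, ← TensorProduct.span_tmul_eq_top, Submodule.span_le]
  rintro _ ⟨a, b, rfl⟩
  have hle : lowerHull α μ v ≤
      (lowerHull α (μ + ν) (v ⊗ₜ[K] w)).comap ((TensorProduct.mk K V W).flip b) :=
    lowerHull_le (hleft b) fun k hk a ha ↦ hright k hk a ha b
  exact hle (hvtop ▸ Submodule.mem_top)

end TensorProduct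

section TensorProductForms

variable {R 𝔤 V W : Type*} [CommRing R] [LieRing 𝔤]
variable [AddCommGroup V] [Module R V] [AddCommGroup W] [Module R W]
variable {B : LinearMap.BilinForm R V} {C : LinearMap.BilinForm R W}

lemma flip_tmul :
    LinearMap.BilinForm.flip (B.tmul C) = LinearMap.BilinForm.tmul B.flip C.flip :=
  TensorProduct.ext' fun _ _ ↦ TensorProduct.ext' fun _ _ ↦ rfl

lemma smul_tmul_smul (a b : R) :
    LinearMap.BilinForm.tmul (a • B) (b • C) = (a * b) • B.tmul C := by
  refine TensorProduct.ext' fun v w ↦ TensorProduct.ext' fun v' w' ↦ ?_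
  exact mul_mul_mul_comm b (C w w') a (B v v') |>.trans (by rw [mul_comm b a]; rfl)

lemma isAdjointPair_tmul {f f' : Module.End R V} {g g' : Module.End R W}
    (hf : B.IsAdjointPair B f f') (hg : C.IsAdjointPair C g g') :
    LinearMap.IsAdjointPair (B.tmul C) (B.tmul C)
      (TensorProduct.map f g) (TensorProduct.map f' g') := by
  rw [LinearMap.isAdjointPair_iff_comp_eq_compl₂]
  refine TensorProduct.ext' fun v w ↦ TensorProduct.ext' fun v' w' ↦ ?_
  simp [hf v v', hg w w']

lemma isSkewAdjoint_rTensor {f : Module.End R V} (hf : B.IsSkewAdjoint f) :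
    (B.tmul C).IsSkewAdjoint (f.rTensor W) := by
  rw [LinearMap.IsSkewAdjoint, ← LinearMap.coe_neg, ← LinearMap.rTensor_neg]
  exact isAdjointPair_tmul hf LinearMap.isAdjointPair_one

lemma isSkewAdjoint_lTensor {g : Module.End R W} (hg : C.IsSkewAdjoint g) :
    (B.tmul C).IsSkewAdjoint (g.lTensor V) := by
  rw [LinearMap.IsSkewAdjoint, ← LinearMap.coe_neg, ← LinearMap.lTensor_neg]
  exact isAdjointPair_tmul LinearMap.isAdjointPair_one hg

lemma isSkewAdjoint_add {f g : Module.End R V} (hf : B.IsSkewAdjoint f)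
    (hg : B.IsSkewAdjoint g) : B.IsSkewAdjoint (f + g) :=
  B.mem_skewAdjointSubmodule _ |>.mp <| add_mem
    (B.mem_skewAdjointSubmodule _ |>.mpr hf) (B.mem_skewAdjointSubmodule _ |>.mpr hg)

variable [LieAlgebra R 𝔤] [LieRingModule 𝔤 V] [LieModule R 𝔤 V]
variable [LieRingModule 𝔤 W] [LieModule R 𝔤 W]

lemma lieInvariant_iff_forall_isSkewAdjoint :
    B.lieInvariant 𝔤 ↔ ∀ x : 𝔤, B.IsSkewAdjoint (toEnd R 𝔤 V x) := by
  simp [LinearMap.BilinForm.lieInvariant, LinearMap.IsSkewAdjoint, LinearMap.IsAdjointPair]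

lemma lieInvariant_tmul (hB : B.lieInvariant 𝔤) (hC : C.lieInvariant 𝔤) :
    LinearMap.BilinForm.lieInvariant 𝔤 (B.tmul C) := by
  rw [lieInvariant_iff_forall_isSkewAdjoint] at *
  exact fun x ↦ isSkewAdjoint_add (isSkewAdjoint_rTensor (hB x)) (isSkewAdjoint_lTensor (hC x))

variable (R 𝔤 V) in
/-- The action of `𝔤` on `V`, as a morphism of `𝔤`-modules from the adjoint module to
`End V`. -/
def actionLieHom : 𝔤 →ₗ⁅R,𝔤⁆ Module.End R V where
  __ := (toEnd R 𝔤 V : 𝔤 →ₗ[R] Module.End R V)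
  map_lie' {x y} := LinearMap.ext fun v ↦ lie_lie x y v

variable (R 𝔤 V W) in
/-- The morphism of `𝔤`-modules `End V → End (V ⊗ W)` sending `f` to `f ⊗ 1`. -/
def rTensorLieHom : Module.End R V →ₗ⁅R,𝔤⁆ Module.End R (V ⊗[R] W) where
  __ := LinearMap.rTensorHom W
  map_lie' {x f} := by
    refine TensorProduct.ext' fun v w ↦ ?_
    simp [TensorProduct.sub_tmul]

variable (R 𝔤 V W) in
/-- The morphism of `𝔤`-modules `End W → End (V ⊗ W)` sending `g` to `1 ⊗ g`. -/
def lTensorLieHom : Module.End R W →ₗ⁅R,𝔤⁆ Module.End R (V ⊗[R] W) where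
  __ := LinearMap.lTensorHom V
  map_lie' {x f} := by
    refine TensorProduct.ext' fun v w ↦ ?_
    simp [TensorProduct.tmul_sub]

end TensorProductForms

section Polarization

variable {H : LieSubalgebra ℂ L} [H.IsCartanSubalgebra] {r : ℕ} {α : Fin r → Dual ℂ H}
variable {V W : Type*} [AddCommGroup V] [Module ℂ V] [LieRingModule L V] [LieModule ℂ L V]
variable [AddCommGroup W] [Module ℂ W] [LieRingModule L W] [LieModule ℂ L W]

/-- An invariant form `B` of sign `ε` on `V` which pairs the highest weight vector `v` of weight
`μ` with the lowest weight vector `u` of weight `-μ` nontrivially, where every element of `V` is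
the sum of a multiple of `u` and of vectors of weights higher than `-μ`. -/
structure IsPolarization (H : LieSubalgebra ℂ L) [H.IsCartanSubalgebra] (α : Fin r → Dual ℂ H)
    (μ : Dual ℂ H) (B : LinearMap.BilinForm ℂ V) (ε : ℤˣ) (v u : V) : Prop where
  lieInvariant : B.lieInvariant L
  flip_eq : B.flip = ε • B
  highest : IsHWVector H α μ v
  lowest : IsHWVector H (-α) (-μ) u
  lowerHull_eq_top : lowerHull (-α) (-μ) u = ⊤
  apply_ne_zero : B v u ≠ 0

variable {μ ν : Dual ℂ H} {B : LinearMap.BilinForm ℂ V} {C : LinearMap.BilinForm ℂ W}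
variable {ε η : ℤˣ} {v v' : V} {w w' : W}

lemma IsPolarization.ne_zero (hB : IsPolarization H α μ B ε v v') : B ≠ 0 := by
  rintro rfl
  exact hB.apply_ne_zero rfl

lemma IsHWVector.tmul (hv : IsHWVector H α μ v) (hw : IsHWVector H α ν w) :
    IsHWVector H α (μ + ν) (v ⊗ₜ[ℂ] w) where
  ne_zero := tmul_ne_zero hv.ne_zero hw.ne_zero
  mem_weightSpace := tmul_mem_weightSpace hv.mem_weightSpace hw.mem_weightSpace
  lie_eq_zero χ hχ e he := by
    rw [TensorProduct.LieModule.lie_tmul_right, hv.lie_eq_zero χ hχ e he,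
      hw.lie_eq_zero χ hχ e he, TensorProduct.zero_tmul, TensorProduct.tmul_zero, add_zero]

lemma IsPolarization.tmul (hB : IsPolarization H α μ B ε v v')
    (hC : IsPolarization H α ν C η w w') :
    IsPolarization H α (μ + ν) (B.tmul C) (ε * η) (v ⊗ₜ[ℂ] w) (v' ⊗ₜ[ℂ] w') where
  lieInvariant := lieInvariant_tmul hB.lieInvariant hC.lieInvariant
  flip_eq := by
    rw [flip_tmul, hB.flip_eq, hC.flip_eq]
    simp only [Units.smul_def, ← Int.cast_smul_eq_zsmul ℂ, smul_tmul_smul, Units.val_mul,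
      Int.cast_mul]
  highest := hB.highest.tmul hC.highest
  lowest := neg_add μ ν ▸ hB.lowest.tmul hC.lowest
  lowerHull_eq_top := neg_add μ ν ▸ lowerHull_tmul_eq_top hB.lowest.mem_weightSpace
    hC.lowest.mem_weightSpace hB.lowerHull_eq_top hC.lowerHull_eq_top
  apply_ne_zero := mul_ne_zero hC.apply_ne_zero hB.apply_ne_zero

lemma isPolarization_trivialLieModule :
    let e := TrivialLieModule.equiv ℂ L ℂ
    IsPolarization H α 0 ((LinearMap.mul ℂ ℂ).compl₁₂ e.toLinearMap e.toLinearMap) 1 (e.symm 1)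
      (e.symm 1) := by
  intro e
  have htriv (x : L) (a : TrivialLieModule ℂ L ℂ) : ⁅x, a⁆ = 0 := trivial_lie_zero _ _ _ _
  have he (a : TrivialLieModule ℂ L ℂ) : a = e a • e.symm 1 := by simp [← map_smul]
  have hone (β : Fin r → Dual ℂ H) : IsHWVector H β 0 (e.symm 1) :=
    ⟨by simp, (LieModule.mem_weightSpace _ _).mpr fun _ ↦ by simp [htriv],
      fun _ _ _ _ ↦ htriv _ _⟩
  refine ⟨fun x a b ↦ by simp [htriv], ?_, hone α, by simpa using hone (-α), ?_, by simp⟩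
  · rw [one_smul]
    exact LinearMap.ext₂ fun a b ↦ mul_comm (e b) (e a)
  · refine eq_top_iff.mpr fun a _ ↦ ?_
    rw [he a]
    exact Submodule.smul_mem _ _ (self_mem_lowerHull _ _ _)

variable [FiniteDimensional ℂ L] [IsKilling ℂ L] [FiniteDimensional ℂ V]

lemma IsHWVector.exists_isPolarization [LieModule.IsIrreducible ℂ L V] (hb : IsBase H α)
    (hv : IsHWVector H α μ v) (hB : B.lieInvariant L) (h0 : B ≠ 0) :
    ∃ ε u, IsPolarization H α μ B ε v u := by
  obtain ⟨ε, hε⟩ := lieInvariant_exists_flip_eq_smul hB h0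
  obtain ⟨u, hu, hvu⟩ := hv.exists_isHWVector_neg hb hB h0
  exact ⟨ε, u, hB, hε, hv, hu, hu.lowerHull_eq_top hb.neg, hvu⟩

end Polarization

section FactorActions

variable {H : LieSubalgebra ℂ L} {r : ℕ} {ι : Type*}
variable {V W : Type*} [AddCommGroup V] [Module ℂ V] [LieRingModule L V] [LieModule ℂ L V]
variable [AddCommGroup W] [Module ℂ W] [LieRingModule L W] [LieModule ℂ L W]

/-- Equivariant maps `ρ i : L → End W`, skew for `B`, such that `ρ i h` multiplies `w` by `θ i h`
for `h` in `H`. The example to keep in mind is a tensor product `W` of modules of several types,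
with `ρ i x` the action of `x` on the factors of type `i`. -/
structure IsSkewActionFamily (B : LinearMap.BilinForm ℂ W) (w : W) (θ : ι → Dual ℂ H)
    (ρ : ι → L →ₗ⁅ℂ,L⁆ Module.End ℂ W) : Prop where
  isSkewAdjoint : ∀ i x, B.IsSkewAdjoint (ρ i x)
  apply_eq_smul : ∀ i (h : H), ρ i h w = θ i h • w

variable {B : LinearMap.BilinForm ℂ V} {C : LinearMap.BilinForm ℂ W} {v : V} {w : W}
variable {θ : ι → Dual ℂ H} {ρ : ι → L →ₗ⁅ℂ,L⁆ Module.End ℂ W}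

lemma IsSkewActionFamily.exists_tmul [DecidableEq ι] (hρ : IsSkewActionFamily C w θ ρ)
    (hB : B.lieInvariant L) {μ : Dual ℂ H} (hv : ∀ h : H, ⁅(h : L), v⁆ = μ h • v) (k : ι) :
    ∃ ρ' : ι → L →ₗ⁅ℂ,L⁆ Module.End ℂ (V ⊗[ℂ] W),
      IsSkewActionFamily (B.tmul C) (v ⊗ₜ w) (Pi.single k μ + θ) ρ' := by
  let ρ₁ : L →ₗ⁅ℂ,L⁆ Module.End ℂ (V ⊗[ℂ] W) :=
    (rTensorLieHom ℂ L V W).comp (actionLieHom ℂ L V)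
  have hρ₁ (x : L) : LinearMap.IsSkewAdjoint (B.tmul C) (ρ₁ x) :=
    isSkewAdjoint_rTensor (lieInvariant_iff_forall_isSkewAdjoint.mp hB x)
  have hρ₁v (h : H) : ρ₁ h (v ⊗ₜ w) = μ h • (v ⊗ₜ w) := by
    rw [TensorProduct.smul_tmul', ← hv]
    rfl
  let ρ₂ (i : ι) : L →ₗ⁅ℂ,L⁆ Module.End ℂ (V ⊗[ℂ] W) := (lTensorLieHom ℂ L V W).comp (ρ i)
  have hρ₂ (i : ι) (x : L) : LinearMap.IsSkewAdjoint (B.tmul C) (ρ₂ i x) :=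
    isSkewAdjoint_lTensor (hρ.isSkewAdjoint i x)
  have hρ₂v (i : ι) (h : H) : ρ₂ i h (v ⊗ₜ w) = θ i h • (v ⊗ₜ w) := by
    rw [← TensorProduct.tmul_smul, ← hρ.apply_eq_smul]
    rfl
  refine ⟨Pi.single k ρ₁ + ρ₂, fun i x ↦ ?_, fun i h ↦ ?_⟩
  · rcases eq_or_ne i k with rfl | hik
    · rw [Pi.add_apply, Pi.single_eq_same]
      exact isSkewAdjoint_add (hρ₁ x) (hρ₂ i x)
    · simpa [hik] using hρ₂ i x
  · rcases eq_or_ne i k with rfl | hik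
    · simp [hρ₁v, hρ₂v, add_smul]
    · simp [hik, hρ₂v]

variable [H.IsCartanSubalgebra] {α : Fin r → Dual ℂ H}

theorem exists_isPolarization_isSkewActionFamily [DecidableEq ι]
    {ϖ : ι → Dual ℂ H} (F : ι → Type) [∀ i, AddCommGroup (F i)] [∀ i, Module ℂ (F i)]
    [∀ i, LieRingModule L (F i)] [∀ i, LieModule ℂ L (F i)] [∀ i, FiniteDimensional ℂ (F i)]
    (hF : ∀ i, ∃ (B : LinearMap.BilinForm ℂ (F i)) (ε : ℤˣ) (v u : F i),
      IsPolarization H α (ϖ i) B ε v u) (s : Multiset ι) :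
    ∃ (W : Type) (_ : AddCommGroup W) (_ : Module ℂ W) (_ : LieRingModule L W)
      (_ : LieModule ℂ L W) (_ : FiniteDimensional ℂ W) (B : LinearMap.BilinForm ℂ W) (ε : ℤˣ)
      (w u : W) (ρ : ι → L →ₗ⁅ℂ,L⁆ Module.End ℂ W),
      IsPolarization H α (s.map ϖ).sum B ε w u ∧
        IsSkewActionFamily B w (fun i ↦ s.count i • ϖ i) ρ := by
  induction s using Multiset.induction with
  | empty =>
    exact ⟨TrivialLieModule ℂ L ℂ, inferInstance, inferInstance, inferInstance, inferInstance,
      inferInstanceAs (FiniteDimensional ℂ ℂ), _, 1, _, _, 0, isPolarization_trivialLieModule,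
      fun _ _ ↦ LinearMap.mem_skewAdjointSubmodule _ |>.mp (zero_mem _), fun _ _ ↦ by simp⟩
  | cons k s ih =>
    obtain ⟨W, _, _, _, _, _, C, η, w, w', ρ, hC, hρ⟩ := ih
    obtain ⟨B, ε, v, v', hB⟩ := hF k
    obtain ⟨ρ', hρ'⟩ := hρ.exists_tmul hB.lieInvariant hB.highest.lie_eq_smul k
    have hcount : (fun i ↦ (k ::ₘ s).count i • ϖ i) =
        Pi.single k (ϖ k) + fun i ↦ s.count i • ϖ i := by
      funext i
      rcases eq_or_ne i k with rfl | hik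
      · simp [add_smul, add_comm]
      · simp [hik]
    exact ⟨F k ⊗[ℂ] W, inferInstance, inferInstance, inferInstance, inferInstance,
      inferInstance, B.tmul C, ε * η, v ⊗ₜ w, v' ⊗ₜ w', ρ',
      by simpa using hB.tmul hC, hcount ▸ hρ'⟩

end FactorActions

section TripleForm

variable {R 𝔤 V : Type*} [CommRing R] [AddCommGroup 𝔤] [Module R 𝔤] [AddCommGroup V] [Module R V]

/-- The functional `x ⊗ a ⊗ b ↦ B (ρ x a) b` on `𝔤 ⊗ V ⊗ V`. -/
def tripleForm (B : LinearMap.BilinForm R V) (ρ : 𝔤 →ₗ[R] Module.End R V) :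
    Dual R (𝔤 ⊗[R] (V ⊗[R] V)) :=
  TensorProduct.lift B ∘ₗ TensorProduct.lift (LinearMap.rTensorHom V ∘ₗ ρ)

lemma tripleForm_tmul (B : LinearMap.BilinForm R V) (ρ : 𝔤 →ₗ[R] Module.End R V) (x : 𝔤)
    (a b : V) : tripleForm B ρ (x ⊗ₜ (a ⊗ₜ b)) = B (ρ x a) b := rfl

end TripleForm

section InvariantFunctionals

variable {R 𝔤 M V W : Type*} [CommRing R] [LieRing 𝔤] [LieAlgebra R 𝔤]
variable [AddCommGroup M] [Module R M] [LieRingModule 𝔤 M] [LieModule R 𝔤 M]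
variable [AddCommGroup V] [Module R V] [LieRingModule 𝔤 V] [LieModule R 𝔤 V]
variable [AddCommGroup W] [Module R W] [LieRingModule 𝔤 W] [LieModule R 𝔤 W]

lemma mem_maxTrivSubmodule_dual_iff {φ : Dual R M} :
    φ ∈ maxTrivSubmodule R 𝔤 (Dual R M) ↔ ∀ (x : 𝔤) (m : M), φ ⁅x, m⁆ = 0 := by
  simp [LinearMap.ext_iff]

lemma comp_mem_maxTrivSubmodule_dual {φ : Dual R W} (hφ : φ ∈ maxTrivSubmodule R 𝔤 (Dual R W))
    (g : V →ₗ⁅R,𝔤⁆ W) : φ ∘ₗ (g : V →ₗ[R] W) ∈ maxTrivSubmodule R 𝔤 (Dual R V) := by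
  rw [mem_maxTrivSubmodule_dual_iff] at *
  intro x m
  simp [hφ]

lemma mem_maxTrivSubmodule_dual_tmul_iff {φ : Dual R (𝔤 ⊗[R] (V ⊗[R] V))} :
    φ ∈ maxTrivSubmodule R 𝔤 (Dual R (𝔤 ⊗[R] (V ⊗[R] V))) ↔ ∀ (z x : 𝔤) (a b : V),
      φ (⁅z, x⁆ ⊗ₜ (a ⊗ₜ b)) + φ (x ⊗ₜ (⁅z, a⁆ ⊗ₜ b)) + φ (x ⊗ₜ (a ⊗ₜ ⁅z, b⁆)) = 0 := by
  rw [mem_maxTrivSubmodule_dual_iff]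
  refine forall_congr' fun z ↦ ⟨fun h x a b ↦ ?_, fun h ↦ ?_⟩
  · simpa [TensorProduct.tmul_add, add_assoc] using h (x ⊗ₜ (a ⊗ₜ b))
  · suffices φ ∘ₗ toEnd R 𝔤 (𝔤 ⊗[R] (V ⊗[R] V)) z = 0 from LinearMap.congr_fun this
    refine TensorProduct.ext (LinearMap.ext fun x ↦ TensorProduct.ext' fun a b ↦ ?_)
    simpa [TensorProduct.tmul_add, add_assoc] using h x a b

lemma tripleForm_mem_maxTrivSubmodule {B : LinearMap.BilinForm R V} (hB : B.lieInvariant 𝔤)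
    (ρ : 𝔤 →ₗ⁅R,𝔤⁆ Module.End R V) :
    tripleForm B ρ ∈ maxTrivSubmodule R 𝔤 (Dual R (𝔤 ⊗[R] (V ⊗[R] V))) := by
  rw [mem_maxTrivSubmodule_dual_tmul_iff]
  intro z x a b
  simp [tripleForm_tmul, hB z (ρ x a) b]

end InvariantFunctionals

section FactorForms

variable {V W : Type} [AddCommGroup V] [Module ℂ V] [AddCommGroup W] [Module ℂ W]

lemma tripleForm_comp_swapMap {B : LinearMap.BilinForm ℂ V} {ε : ℤˣ} (hε : B.flip = ε • B)
    {ρ : L →ₗ[ℂ] Module.End ℂ V} (hρ : ∀ x, B.IsSkewAdjoint (ρ x)) :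
    tripleForm B ρ ∘ₗ swapMap L V = -ε • tripleForm B ρ := by
  refine TensorProduct.ext (LinearMap.ext fun x ↦ TensorProduct.ext' fun a b ↦ ?_)
  calc B (ρ x b) a = -B b (ρ x a) := by simpa using hρ x b a
    _ = -(ε • B (ρ x a) b) := congrArg _ (LinearMap.congr_fun₂ hε (ρ x a) b)
    _ = -ε • B (ρ x a) b := (Units.neg_smul _ _).symm

variable (L) in
lemma swapMap_comp_lTensor_map (g : V →ₗ[ℂ] W) :
    swapMap L W ∘ₗ (TensorProduct.map g g).lTensor L =
      (TensorProduct.map g g).lTensor L ∘ₗ swapMap L V :=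
  TensorProduct.ext (LinearMap.ext fun _ ↦ TensorProduct.ext' fun _ _ ↦ rfl)

variable {H : LieSubalgebra ℂ L} [H.IsCartanSubalgebra] {r : ℕ} {α : Fin r → Dual ℂ H}
variable [FiniteDimensional ℂ L] [IsKilling ℂ L]

lemma IsBase.span_eq_top (hb : IsBase H α) : Submodule.span ℂ (Set.range α) = ⊤ := by
  rw [eq_top_iff, ← IsKilling.span_weight_isNonZero_eq_top ℂ L H, Submodule.span_le]
  rintro _ ⟨β, hβ, rfl⟩
  have hsum (c : Fin r → ℕ) : ∑ j, (c j : ℂ) • α j ∈ Submodule.span ℂ (Set.range α) :=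
    Submodule.sum_mem _ fun j _ ↦ Submodule.smul_mem _ _ (Submodule.subset_span ⟨j, rfl⟩)
  obtain ⟨c, hc⟩ | ⟨c, hc⟩ := hb.pos_neg _ (isRoot_toLinear hβ)
  · exact hc ▸ hsum c
  · exact hc ▸ Submodule.neg_mem _ (hsum c)

variable {hc : Fin r → H} {ϖ : Fin r → Dual ℂ H}

lemma IsBase.span_range_eq_top_of_dual (hb : IsBase H α)
    (hϖ : ∀ j k, ϖ j (hc k) = if j = k then (1 : ℂ) else 0) :
    Submodule.span ℂ (Set.range hc) = ⊤ := by
  have hrank : r = finrank ℂ H := by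
    have := finrank_eq_card_basis (Basis.mk hb.indep hb.span_eq_top.ge)
    rwa [Subspace.dual_finrank_eq, Fintype.card_fin, eq_comm] at this
  have hindep : LinearIndependent ℂ hc := by
    refine Fintype.linearIndependent_iff.mpr fun g hg i ↦ ?_
    simpa [hϖ] using congrArg (ϖ i) hg
  exact hindep.span_eq_top_of_card_eq_finrank' (by simpa using hrank)

lemma IsBase.exists_multiset_sum_eq (hb : IsBase H α)
    (hϖ : ∀ j k, ϖ j (hc k) = if j = k then (1 : ℂ) else 0) {μ : Dual ℂ H}
    (hμ : IsDomInt hc μ) :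
    ∃ s : Multiset (Fin r), (s.map ϖ).sum = μ ∧ ∀ j, (s.count j : ℂ) = μ (hc j) := by
  choose n hn using hμ
  refine ⟨Finsupp.toMultiset (Finsupp.equivFunOnFinite.symm n), ?_, fun j ↦ by simp [hn]⟩
  refine LinearMap.ext_on_range (hb.span_range_eq_top_of_dual hϖ) fun k ↦ ?_
  simp +contextual [Finset.sum_multiset_map_count, hϖ, hn]

variable [LieRingModule L V] [LieModule ℂ L V] [LieRingModule L W] [LieModule ℂ L W]
variable [FiniteDimensional ℂ W] {μ : Dual ℂ H} {v : V} {w w' : W}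

lemma IsPolarization.comap [LieModule.IsIrreducible ℂ L V] (hb : IsBase H α)
    (hco : ∀ j, IsCoroot H (α j) (hc j)) {C : LinearMap.BilinForm ℂ W} {ε : ℤˣ}
    (hC : IsPolarization H α μ C ε w w') (hv : IsHWVector H α μ v) {g : V →ₗ⁅ℂ,L⁆ W}
    (hg : g v = w) :
    ∃ u, IsPolarization H α μ (C.compl₁₂ (g : V →ₗ[ℂ] W) (g : V →ₗ[ℂ] W)) ε v u := by
  have hw' : w' ∈ LieSubmodule.lieSpan ℂ L {w} :=
    hC.highest.mem_lieSpan_of_isHWVector_neg hb hco hC.lowest hC.lowerHull_eq_top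
  have hrange : LieSubmodule.lieSpan ℂ L {w} ≤ g.range :=
    LieSubmodule.lieSpan_le.mpr (Set.singleton_subset_iff.mpr ⟨v, hg⟩)
  obtain ⟨u, rfl⟩ := hrange hw'
  have hinj : Function.Injective g := by
    refine g.ker_eq_bot.mp ((eq_bot_or_eq_top _).resolve_right fun h ↦ ?_)
    have hgv : g v = 0 := by rw [← LieModuleHom.mem_ker, h]; trivial
    exact hC.highest.ne_zero (hg ▸ hgv)
  have hu : IsHWVector H (-α) (-μ) u := by
    refine ⟨fun h ↦ hC.lowest.ne_zero (by simp [h]), ?_, fun χ hχ e he ↦ hinj ?_⟩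
    · exact (LieModule.mem_weightSpace _ _).mpr fun h ↦ hinj (by
        simpa using hC.lowest.lie_eq_smul h)
    · simpa using hC.lowest.lie_eq_zero χ hχ e he
  refine ⟨u, ?_, ?_, hv, hu, hu.lowerHull_eq_top hb.neg, by simpa [hg] using hC.apply_ne_zero⟩
  · intro x a b
    simp [hC.lieInvariant x (g a) (g b)]
  · exact LinearMap.ext₂ fun a b ↦ LinearMap.congr_fun₂ hC.flip_eq (g a) (g b)

theorem exists_isPolarization_tripleForm [FiniteDimensional ℂ V] [LieModule.IsIrreducible ℂ L V]
    (hb : IsBase H α) (hco : ∀ j, IsCoroot H (α j) (hc j))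
    (hϖ : ∀ j k, ϖ j (hc k) = if j = k then (1 : ℂ) else 0)
    (F : Fin r → Type) [∀ j, AddCommGroup (F j)] [∀ j, Module ℂ (F j)]
    [∀ j, LieRingModule L (F j)] [∀ j, LieModule ℂ L (F j)] [∀ j, FiniteDimensional ℂ (F j)]
    (hF : ∀ j, ∃ (B : LinearMap.BilinForm ℂ (F j)) (ε : ℤˣ) (v u : F j),
      IsPolarization H α (ϖ j) B ε v u)
    (hμ : IsDomInt hc μ) (hv : IsHWVector H α μ v) :
    ∃ (B : LinearMap.BilinForm ℂ V) (ε : ℤˣ) (u : V)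
      (φ : Fin r → Dual ℂ (L ⊗[ℂ] (V ⊗[ℂ] V))),
      IsPolarization H α μ B ε v u ∧
      ∀ j, φ j ∈ maxTrivSubmodule ℂ L (Dual ℂ (L ⊗[ℂ] (V ⊗[ℂ] V))) ∧
        φ j ∘ₗ swapMap L V = -ε • φ j ∧
        ∀ h : H, φ j ((h : L) ⊗ₜ (v ⊗ₜ u)) = (μ (hc j) * ϖ j h) * B v u := by
  obtain ⟨s, rfl, hs⟩ := hb.exists_multiset_sum_eq hϖ hμ
  obtain ⟨W, _, _, _, _, _, C, ε, w, w', ρ, hC, hρ⟩ :=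
    exists_isPolarization_isSkewActionFamily F hF s
  obtain ⟨g, hg⟩ := hv.exists_lieModuleHom_apply_eq hb hco hC.highest
  obtain ⟨u, hB⟩ := hC.comap hb hco hv hg
  let G : L ⊗[ℂ] (V ⊗[ℂ] V) →ₗ⁅ℂ,L⁆ L ⊗[ℂ] (W ⊗[ℂ] W) :=
    TensorProduct.LieModule.map .id (TensorProduct.LieModule.map g g)
  refine ⟨_, ε, u, fun j ↦ tripleForm C (ρ j) ∘ₗ (G : L ⊗[ℂ] (V ⊗[ℂ] V) →ₗ[ℂ] L ⊗[ℂ] (W ⊗[ℂ] W)),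
    hB, fun j ↦ ⟨?_, ?_, fun h ↦ ?_⟩⟩
  · exact comp_mem_maxTrivSubmodule_dual (tripleForm_mem_maxTrivSubmodule hC.lieInvariant (ρ j)) G
  · have hG : swapMap L W ∘ₗ (G : L ⊗[ℂ] (V ⊗[ℂ] V) →ₗ[ℂ] L ⊗[ℂ] (W ⊗[ℂ] W)) =
        (G : L ⊗[ℂ] (V ⊗[ℂ] V) →ₗ[ℂ] L ⊗[ℂ] (W ⊗[ℂ] W)) ∘ₗ swapMap L V :=
      swapMap_comp_lTensor_map L (g : V →ₗ[ℂ] W)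
    rw [LinearMap.comp_assoc, ← hG, ← LinearMap.comp_assoc,
      tripleForm_comp_swapMap hC.flip_eq (hρ.isSkewAdjoint j), LinearMap.smul_comp]
  · calc tripleForm C (ρ j) ((h : L) ⊗ₜ (g v ⊗ₜ g u))
      _ = C ((s.count j • ϖ j) h • g v) (g u) := by
        rw [tripleForm_tmul, hg, ← hρ.apply_eq_smul]; rfl
      _ = _ := by simp [hs]

end FactorForms

section InvariantTrilinearForms

variable {H : LieSubalgebra ℂ L} [H.IsCartanSubalgebra] {r : ℕ} {α : Fin r → Dual ℂ H}
variable {V : Type*} [AddCommGroup V] [Module ℂ V] [LieRingModule L V] [LieModule ℂ L V]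
variable {μ : Dual ℂ H} {v u : V} {φ : Dual ℂ (L ⊗[ℂ] (V ⊗[ℂ] V))}

lemma IsHWVector.apply_tmul_eq_zero_of_coroot_eq_zero [FiniteDimensional ℂ L]
    [FiniteDimensional ℂ V] [IsKilling ℂ L] (hb : IsBase H α) (hv : IsHWVector H α μ v)
    (hu : IsHWVector H (-α) (-μ) u)
    (hφ : φ ∈ maxTrivSubmodule ℂ L (Dual ℂ (L ⊗[ℂ] (V ⊗[ℂ] V)))) {i : Fin r} {t : H}
    (ht : IsCoroot H (α i) t) (hμ : μ t = 0) : φ ((t : L) ⊗ₜ (v ⊗ₜ u)) = 0 := by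
  obtain ⟨e, he, f, hf, hsl2⟩ := ht.exists_isSl2Triple
  have hev : ⁅e, v⁆ = 0 := hv.lie_eq_zero _ (hb.isPosRoot_simple i) e he
  have heu : ⁅e, u⁆ = 0 :=
    hu.lie_eq_zero_of_coroot_eq_zero hb.neg (t := -t) hf (by simpa using hsl2.symm) (by simp [hμ])
  simpa [hsl2.lie_e_f, hev, heu] using mem_maxTrivSubmodule_dual_tmul_iff.mp hφ e f v u

variable [FiniteDimensional ℂ L] [IsKilling ℂ L]

lemma IsHWVector.apply_tmul_eq_zero_of_cartan (hv : IsHWVector H α μ v)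
    (hu : IsHWVector H (-α) (-μ) u)
    (hφ : φ ∈ maxTrivSubmodule ℂ L (Dual ℂ (L ⊗[ℂ] (V ⊗[ℂ] V))))
    (hH : ∀ h : H, φ ((h : L) ⊗ₜ (v ⊗ₜ u)) = 0) (x : L) : φ (x ⊗ₜ (v ⊗ₜ u)) = 0 := by
  rw [mem_maxTrivSubmodule_dual_tmul_iff] at hφ
  suffices LinearMap.ker (φ ∘ₗ (TensorProduct.mk ℂ L (V ⊗[ℂ] V)).flip (v ⊗ₜ u)) = ⊤ from
    LinearMap.congr_fun (LinearMap.ker_eq_top.mp this) x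
  refine eq_top_of_cartan_le_of_rootSpace_le (H := H) (fun h hh ↦ hH ⟨h, hh⟩) fun χ hχ x hx ↦ ?_
  obtain ⟨h, hh⟩ := DFunLike.ne_iff.mp hχ.1
  have hx' : ⁅(h : L), x⁆ = χ h • x := IsKilling.lie_eq_smul_of_mem_rootSpace hx h
  have hweight : χ h • φ (x ⊗ₜ (v ⊗ₜ u)) = 0 := by
    simpa [hv.lie_eq_smul, hu.lie_eq_smul, hx', ← TensorProduct.smul_tmul',
      TensorProduct.tmul_neg] using hφ h x v u
  exact (smul_eq_zero.mp hweight).resolve_left hh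

lemma IsHWVector.eq_zero_of_apply_cartan_eq_zero [LieModule.IsIrreducible ℂ L V]
    (hb : IsBase H α) (hv : IsHWVector H α μ v) (hu : IsHWVector H (-α) (-μ) u)
    (hφ : φ ∈ maxTrivSubmodule ℂ L (Dual ℂ (L ⊗[ℂ] (V ⊗[ℂ] V))))
    (hH : ∀ h : H, φ ((h : L) ⊗ₜ (v ⊗ₜ u)) = 0) : φ = 0 := by
  have hvu := hv.apply_tmul_eq_zero_of_cartan hu hφ hH
  rw [mem_maxTrivSubmodule_dual_tmul_iff] at hφ
  have hau (a : V) (x : L) : φ (x ⊗ₜ (a ⊗ₜ u)) = 0 := by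
    let p : Submodule ℂ V := ⨅ x : L,
      LinearMap.ker (φ ∘ₗ TensorProduct.mk ℂ L (V ⊗[ℂ] V) x ∘ₗ (TensorProduct.mk ℂ V V).flip u)
    have hp {a : V} : a ∈ p ↔ ∀ x : L, φ (x ⊗ₜ (a ⊗ₜ u)) = 0 := by simp [p]
    have hstable : IsPosStable H (-α) p := fun χ hχ f hf a ha ↦ hp.mpr fun x ↦ by
      simpa [hu.lie_eq_zero χ hχ f hf, hp.mp ha] using hφ f x a u
    have htop : LieSubmodule.lieSpan ℂ L {v} = ⊤ :=
      lieSubmodule_eq_top_of_mem (LieSubmodule.subset_lieSpan rfl) hv.ne_zero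
    exact hp.mp (hv.lieSpan_le hb (hp.mpr hvu) hstable (htop ▸ LieSubmodule.mem_top a)) x
  let q : Submodule ℂ V := ⨅ (x : L) (a : V),
    LinearMap.ker (φ ∘ₗ TensorProduct.mk ℂ L (V ⊗[ℂ] V) x ∘ₗ TensorProduct.mk ℂ V V a)
  have hq {b : V} : b ∈ q ↔ ∀ (x : L) (a : V), φ (x ⊗ₜ (a ⊗ₜ b)) = 0 := by simp [q]
  let N : LieSubmodule ℂ L V :=
    { q with lie_mem := fun {z b} hb ↦ hq.mpr fun x a ↦ by simpa [hq.mp hb] using hφ z x a b }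
  have hN : N = ⊤ := lieSubmodule_eq_top_of_mem (m := u) (hq.mpr fun x a ↦ hau a x) hu.ne_zero
  refine TensorProduct.ext (LinearMap.ext fun x ↦ TensorProduct.ext' fun a b ↦ ?_)
  exact hq.mp (hN.ge (LieSubmodule.mem_top b)) x a

end InvariantTrilinearForms

section InvariantsDuality

variable {K V W : Type*} [Field K] [AddCommGroup V] [Module K V] [AddCommGroup W] [Module K W]
variable [FiniteDimensional K V]

lemma nondegenerate_tmul [FiniteDimensional K W] {B : LinearMap.BilinForm K V}
    {C : LinearMap.BilinForm K W} (hB : B.Nondegenerate) (hC : C.Nondegenerate) :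
    LinearMap.BilinForm.Nondegenerate (B.tmul C) := by
  let E : V ⊗[K] W ≃ₗ[K] Dual K (V ⊗[K] W) :=
    (TensorProduct.congr (B.toDual hB) (C.toDual hC)).trans (TensorProduct.dualDistribEquiv K V W)
  have hE : B.tmul C = E.toLinearMap := by
    refine TensorProduct.ext' fun v w ↦ TensorProduct.ext' fun v' w' ↦ mul_comm _ _
  refine .ofSeparatingLeft (LinearMap.separatingLeft_iff_ker_eq_bot.mpr ?_)
  exact hE ▸ E.ker

variable {𝔤 : Type*} [LieRing 𝔤] [LieAlgebra K 𝔤] [LieRingModule 𝔤 V] [LieModule K 𝔤 V]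
variable {Ω : LinearMap.BilinForm K V}

/-- The isomorphism of `𝔤`-modules from `V` to its dual given by a nondegenerate invariant form. -/
noncomputable def lieInvariantDualEquiv (hΩ : Ω.lieInvariant 𝔤) (hnd : Ω.Nondegenerate) :
    V ≃ₗ⁅K,𝔤⁆ Dual K V :=
  { Ω.toDual hnd with map_lie' := fun {x a} ↦ LinearMap.ext fun b ↦ hΩ x a b }

lemma apply_eq_smul_of_mem_maxTrivSubmodule (hΩ : Ω.lieInvariant 𝔤) (hnd : Ω.Nondegenerate)
    {S : Module.End K V} (hS : Ω.IsAdjointPair Ω S S) {c : ℤˣ}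
    (hc : ∀ φ ∈ maxTrivSubmodule K 𝔤 (Dual K V), φ ∘ₗ S = c • φ) {s : V}
    (hs : s ∈ maxTrivSubmodule K 𝔤 V) : S s = c • s := by
  let E := lieInvariantDualEquiv hΩ hnd
  have hEs : E s ∈ maxTrivSubmodule K 𝔤 (Dual K V) := (maxTrivEquiv E ⟨s, hs⟩).2
  refine E.injective (LinearMap.ext fun t ↦ ?_)
  rw [Units.smul_def, map_zsmul, ← Units.smul_def, ← hc _ hEs]
  exact hS s t

end InvariantsDuality

section SwapSquares

variable {V : Type} [AddCommGroup V] [Module ℂ V]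

lemma isAdjointPair_swapMap {κ : LinearMap.BilinForm ℂ L} {B : LinearMap.BilinForm ℂ V} :
    LinearMap.IsAdjointPair (κ.tmul (B.tmul B)) (κ.tmul (B.tmul B)) (swapMap L V)
      (swapMap L V) := by
  refine isAdjointPair_tmul LinearMap.isAdjointPair_one ?_
  rw [LinearMap.isAdjointPair_iff_comp_eq_compl₂]
  exact TensorProduct.ext' fun a b ↦ TensorProduct.ext' fun c d ↦ mul_comm _ _

variable [LieRingModule L V] [LieModule ℂ L V]

lemma symSquareInvariants_eq_bot
    (h : ∀ s ∈ maxTrivSubmodule ℂ L (L ⊗[ℂ] (V ⊗[ℂ] V)), swapMap L V s = -s) :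
    symSquareInvariants L V = ⊥ :=
  have : IsAddTorsionFree (L ⊗[ℂ] (V ⊗[ℂ] V)) := .of_isTorsionFree ℂ _
  eq_bot_iff.mpr fun s ⟨hs, hsym⟩ ↦ self_eq_neg.mp <|
    (sub_eq_zero.mp (LinearMap.mem_ker.mp hsym)).symm.trans (h s hs)

lemma altSquareInvariants_eq_bot
    (h : ∀ s ∈ maxTrivSubmodule ℂ L (L ⊗[ℂ] (V ⊗[ℂ] V)), swapMap L V s = s) :
    altSquareInvariants L V = ⊥ :=
  have : IsAddTorsionFree (L ⊗[ℂ] (V ⊗[ℂ] V)) := .of_isTorsionFree ℂ _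
  eq_bot_iff.mpr fun s ⟨hs, halt⟩ ↦ self_eq_neg.mp <|
    (h s hs).symm.trans (eq_neg_of_add_eq_zero_left (LinearMap.mem_ker.mp halt))

lemma symSquareInvariants_eq_maxTrivSubmodule
    (h : ∀ s ∈ maxTrivSubmodule ℂ L (L ⊗[ℂ] (V ⊗[ℂ] V)), swapMap L V s = s) :
    symSquareInvariants L V = (maxTrivSubmodule ℂ L (L ⊗[ℂ] (V ⊗[ℂ] V))).toSubmodule :=
  inf_eq_left.mpr fun s hs ↦ sub_eq_zero.mpr (h s hs)

lemma altSquareInvariants_eq_maxTrivSubmodule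
    (h : ∀ s ∈ maxTrivSubmodule ℂ L (L ⊗[ℂ] (V ⊗[ℂ] V)), swapMap L V s = -s) :
    altSquareInvariants L V = (maxTrivSubmodule ℂ L (L ⊗[ℂ] (V ⊗[ℂ] V))).toSubmodule :=
  inf_eq_left.mpr fun s hs ↦ add_eq_zero_iff_eq_neg.mpr (h s hs)

end SwapSquares

section CountingInvariants

lemma exists_basis_of_apply_eq_single {R E κ : Type*} [CommRing R] [AddCommGroup E] [Module R E]
    [Finite κ] [DecidableEq κ] {f : E →ₗ[R] κ → R} (hf : Function.Injective f) {e : κ → E}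
    (he : ∀ j, f (e j) = Pi.single j 1) : ∃ b : Basis κ R E, ⇑b = e := by
  cases nonempty_fintype κ
  have hinv : f ∘ₗ Fintype.linearCombination R e = .id :=
    (Pi.basisFun R κ).ext fun j ↦ by simp [he]
  have hsurj : Function.Surjective f := fun c ↦ ⟨_, LinearMap.congr_fun hinv c⟩
  refine ⟨.ofEquivFun (.ofBijective f ⟨hf, hsurj⟩), funext fun j ↦ ?_⟩
  rw [Basis.coe_ofEquivFun, LinearEquiv.symm_apply_eq]
  exact (he j).symm

variable [FiniteDimensional ℂ L] [IsKilling ℂ L]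
variable {H : LieSubalgebra ℂ L} [H.IsCartanSubalgebra] {r : ℕ} {α : Fin r → Dual ℂ H}
variable {V : Type} [AddCommGroup V] [Module ℂ V] [LieRingModule L V] [LieModule ℂ L V]
variable [FiniteDimensional ℂ V] [LieModule.IsIrreducible ℂ L V]
variable {hc : Fin r → H} {ϖ : Fin r → Dual ℂ H} {μ : Dual ℂ H} {v u : V}
variable {B : LinearMap.BilinForm ℂ V} {ε : ℤˣ} {φ : Fin r → Dual ℂ (L ⊗[ℂ] (V ⊗[ℂ] V))}

lemma IsHWVector.eq_zero_of_apply_coroot_eq_zero (hb : IsBase H α)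
    (hco : ∀ j, IsCoroot H (α j) (hc j))
    (hϖ : ∀ j k, ϖ j (hc k) = if j = k then (1 : ℂ) else 0)
    (hv : IsHWVector H α μ v) (hu : IsHWVector H (-α) (-μ) u)
    {ψ : Dual ℂ (L ⊗[ℂ] (V ⊗[ℂ] V))}
    (hψ : ψ ∈ maxTrivSubmodule ℂ L (Dual ℂ (L ⊗[ℂ] (V ⊗[ℂ] V))))
    (h0 : ∀ j, μ (hc j) ≠ 0 → ψ ((hc j : L) ⊗ₜ (v ⊗ₜ u)) = 0) : ψ = 0 := by
  have hcor (j : Fin r) : ψ ((hc j : L) ⊗ₜ (v ⊗ₜ u)) = 0 := by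
    by_cases hj : μ (hc j) = 0
    · exact hv.apply_tmul_eq_zero_of_coroot_eq_zero hb hu hψ (hco j) hj
    · exact h0 j hj
  let ψH : Dual ℂ H :=
    ψ ∘ₗ (TensorProduct.mk ℂ L (V ⊗[ℂ] V)).flip (v ⊗ₜ u) ∘ₗ H.toSubmodule.subtype
  have hψH : ψH = 0 := LinearMap.ext_on_range (hb.span_range_eq_top_of_dual hϖ) hcor
  exact hv.eq_zero_of_apply_cartan_eq_zero hb hu hψ fun h ↦ LinearMap.congr_fun hψH h

lemma IsPolarization.exists_basis_maxTrivSubmodule_dual (hb : IsBase H α)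
    (hco : ∀ j, IsCoroot H (α j) (hc j))
    (hϖ : ∀ j k, ϖ j (hc k) = if j = k then (1 : ℂ) else 0)
    (hB : IsPolarization H α μ B ε v u)
    (hφ : ∀ j, φ j ∈ maxTrivSubmodule ℂ L (Dual ℂ (L ⊗[ℂ] (V ⊗[ℂ] V))))
    (hφH : ∀ j (h : H), φ j ((h : L) ⊗ₜ (v ⊗ₜ u)) = (μ (hc j) * ϖ j h) * B v u) :
    ∃ b : Basis {j // μ (hc j) ≠ 0} ℂ (maxTrivSubmodule ℂ L (Dual ℂ (L ⊗[ℂ] (V ⊗[ℂ] V)))),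
      ∀ j, (b j : Dual ℂ (L ⊗[ℂ] (V ⊗[ℂ] V))) = (μ (hc j) * B v u)⁻¹ • φ j := by
  let f : maxTrivSubmodule ℂ L (Dual ℂ (L ⊗[ℂ] (V ⊗[ℂ] V))) →ₗ[ℂ] {j // μ (hc j) ≠ 0} → ℂ :=
    LinearMap.pi fun j ↦
      Dual.eval ℂ _ ((hc j : L) ⊗ₜ (v ⊗ₜ u)) ∘ₗ (maxTrivSubmodule ℂ L _).toSubmodule.subtype
  have hf : Function.Injective f := (injective_iff_map_eq_zero f).mpr fun ψ hψ ↦ Subtype.ext <|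
    hB.highest.eq_zero_of_apply_coroot_eq_zero hb hco hϖ hB.lowest ψ.2
      fun j hj ↦ congr_fun hψ ⟨j, hj⟩
  let e (j : {j // μ (hc j) ≠ 0}) : maxTrivSubmodule ℂ L (Dual ℂ (L ⊗[ℂ] (V ⊗[ℂ] V))) :=
    (μ (hc j) * B v u)⁻¹ • ⟨φ j, hφ j⟩
  have he (j) : f (e j) = Pi.single j 1 := funext fun k ↦ by
    calc (μ (hc j) * B v u)⁻¹ * φ j ((hc k : L) ⊗ₜ (v ⊗ₜ u))
      _ = ϖ j (hc k) := by
        rw [hφH, mul_right_comm, inv_mul_cancel_left₀ (mul_ne_zero j.2 hB.apply_ne_zero)]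
      _ = _ := by simp [hϖ, Pi.single_apply, eq_comm, Subtype.ext_iff]
  obtain ⟨b, hbe⟩ := exists_basis_of_apply_eq_single hf he
  exact ⟨b, fun j ↦ by rw [hbe]; rfl⟩

variable (L V) in
lemma exists_lieInvariant_nondegenerate_isAdjointPair_swapMap
    (hB : B.lieInvariant L) (h0 : B ≠ 0) :
    ∃ Ω : LinearMap.BilinForm ℂ (L ⊗[ℂ] (V ⊗[ℂ] V)), Ω.lieInvariant L ∧ Ω.Nondegenerate ∧
      Ω.IsAdjointPair Ω (swapMap L V) (swapMap L V) := by
  have hnd := lieInvariant_nondegenerate hB h0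
  exact ⟨(killingForm ℂ L).tmul (B.tmul B),
    lieInvariant_tmul (traceForm_lieInvariant ℂ L L) (lieInvariant_tmul hB hB),
    nondegenerate_tmul (IsKilling.killingForm_nondegenerate ℂ L) (nondegenerate_tmul hnd hnd),
    isAdjointPair_swapMap⟩

theorem IsPolarization.finrank_maxTrivSubmodule (hb : IsBase H α)
    (hco : ∀ j, IsCoroot H (α j) (hc j))
    (hϖ : ∀ j k, ϖ j (hc k) = if j = k then (1 : ℂ) else 0)
    (hB : IsPolarization H α μ B ε v u)
    (hφ : ∀ j, φ j ∈ maxTrivSubmodule ℂ L (Dual ℂ (L ⊗[ℂ] (V ⊗[ℂ] V))))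
    (hφH : ∀ j (h : H), φ j ((h : L) ⊗ₜ (v ⊗ₜ u)) = (μ (hc j) * ϖ j h) * B v u) :
    finrank ℂ (maxTrivSubmodule ℂ L (L ⊗[ℂ] (V ⊗[ℂ] V))) =
      (Finset.univ.filter fun j ↦ μ (hc j) ≠ 0).card := by
  obtain ⟨Ω, hΩ, hnd, -⟩ := exists_lieInvariant_nondegenerate_isAdjointPair_swapMap L V
    hB.lieInvariant hB.ne_zero
  obtain ⟨b, -⟩ := hB.exists_basis_maxTrivSubmodule_dual hb hco hϖ hφ hφH
  rw [(maxTrivEquiv (lieInvariantDualEquiv hΩ hnd)).toLinearEquiv.finrank_eq,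
    finrank_eq_card_basis b, Fintype.card_subtype]

theorem IsPolarization.swapMap_apply_of_mem_maxTrivSubmodule (hb : IsBase H α)
    (hco : ∀ j, IsCoroot H (α j) (hc j))
    (hϖ : ∀ j k, ϖ j (hc k) = if j = k then (1 : ℂ) else 0)
    (hB : IsPolarization H α μ B ε v u)
    (hφ : ∀ j, φ j ∈ maxTrivSubmodule ℂ L (Dual ℂ (L ⊗[ℂ] (V ⊗[ℂ] V))))
    (hφS : ∀ j, φ j ∘ₗ swapMap L V = -ε • φ j)
    (hφH : ∀ j (h : H), φ j ((h : L) ⊗ₜ (v ⊗ₜ u)) = (μ (hc j) * ϖ j h) * B v u)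
    {s : L ⊗[ℂ] (V ⊗[ℂ] V)} (hs : s ∈ maxTrivSubmodule ℂ L (L ⊗[ℂ] (V ⊗[ℂ] V))) :
    swapMap L V s = -ε • s := by
  obtain ⟨Ω, hΩ, hnd, hS⟩ := exists_lieInvariant_nondegenerate_isAdjointPair_swapMap L V
    hB.lieInvariant hB.ne_zero
  obtain ⟨b, hbφ⟩ := hB.exists_basis_maxTrivSubmodule_dual hb hco hϖ hφ hφH
  refine apply_eq_smul_of_mem_maxTrivSubmodule hΩ hnd hS (fun ψ hψ ↦ ?_) hs
  let ι := (maxTrivSubmodule ℂ L (Dual ℂ (L ⊗[ℂ] (V ⊗[ℂ] V)))).toSubmodule.subtype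
  have hι : (swapMap L V).dualMap ∘ₗ ι = -ε • ι := b.ext fun j ↦ by
    calc (b j : Dual ℂ (L ⊗[ℂ] (V ⊗[ℂ] V))) ∘ₗ swapMap L V
      _ = -ε • (b j : Dual ℂ (L ⊗[ℂ] (V ⊗[ℂ] V))) := by
        rw [hbφ, LinearMap.smul_comp, hφS, smul_comm]
  exact LinearMap.congr_fun hι ⟨ψ, hψ⟩

end CountingInvariants

section InvariantFormSign

variable {K 𝔤 M : Type*} [Field K] [LieRing 𝔤] [AddCommGroup M] [Module K M] [LieRingModule 𝔤 M]
variable {B B' : LinearMap.BilinForm K M}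

lemma lieInvariant_iff_forall_add_eq_zero :
    B.lieInvariant 𝔤 ↔ ∀ (x : 𝔤) (a b : M), B ⁅x, a⁆ b + B a ⁅x, b⁆ = 0 := by
  simp only [LinearMap.BilinForm.lieInvariant, add_eq_zero_iff_eq_neg]

lemma ne_zero_of_separatingLeft [Nontrivial M] (hB : B.SeparatingLeft) : B ≠ 0 := by
  rintro rfl
  exact not_subsingleton M ⟨fun a b ↦ (hB a fun _ ↦ rfl).trans (hB b fun _ ↦ rfl).symm⟩

lemma flip_eq_neg_one_smul_iff_isAlt [CharZero K] : B.flip = (-1 : ℤˣ) • B ↔ B.IsAlt := by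
  refine ⟨fun h a ↦ ?_, fun h ↦ LinearMap.ext₂ fun a b ↦ ?_⟩
  · exact self_eq_neg.mp (by simpa using LinearMap.congr_fun₂ h a a)
  · simpa using (h.neg_eq a b).symm

lemma exists_separatingLeft_lieInvariant_flip_eq_smul_iff [CharZero K] [IsAlgClosed K]
    [LieAlgebra K 𝔤] [LieModule K 𝔤 M] [LieModule.IsIrreducible K 𝔤 M] [FiniteDimensional K M]
    (hB : B.lieInvariant 𝔤) (h0 : B ≠ 0) {ε η : ℤˣ} (hε : B.flip = ε • B) :
    (∃ B' : LinearMap.BilinForm K M, B'.flip = η • B' ∧ B'.SeparatingLeft ∧ B'.lieInvariant 𝔤) ↔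
      ε = η := by
  have hnd := lieInvariant_nondegenerate hB h0
  constructor
  · rintro ⟨B', hη, hsep, hinv⟩
    have : Nontrivial M := (LieSubmodule.nontrivial_iff K 𝔤 M).mp inferInstance
    obtain ⟨c, rfl⟩ := lieInvariant_exists_eq_smul hB hnd hinv
    have hcB : c • B ≠ 0 := ne_zero_of_separatingLeft hsep
    have : IsAddTorsionFree (LinearMap.BilinForm K M) := .of_isTorsionFree K _
    refine Units.ext (smul_left_injective ℤ (M := LinearMap.BilinForm K M) hcB ?_)
    calc ε • c • B
      _ = c • B.flip := by rw [hε, smul_comm]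
      _ = η • c • B := hη
  · rintro rfl
    exact ⟨B, hε, hnd.1, hB⟩

end InvariantFormSign

section OrthogonalSymplectic

variable {𝔤 V : Type} [LieRing 𝔤] [AddCommGroup V] [Module ℂ V] [LieRingModule 𝔤 V]

lemma isOrthogonalRep_iff_exists_flip_eq_smul : IsOrthogonalRep (L := 𝔤) V ↔
    ∃ B : LinearMap.BilinForm ℂ V,
      B.flip = (1 : ℤˣ) • B ∧ B.SeparatingLeft ∧ B.lieInvariant 𝔤 := by
  simp only [lieInvariant_iff_forall_add_eq_zero, one_smul, LinearMap.ext_iff₂]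
  exact exists_congr fun B ↦ and_congr_left' forall_comm

lemma isSymplecticRep_iff_exists_flip_eq_smul : IsSymplecticRep (L := 𝔤) V ↔
    ∃ B : LinearMap.BilinForm ℂ V,
      B.flip = (-1 : ℤˣ) • B ∧ B.SeparatingLeft ∧ B.lieInvariant 𝔤 := by
  simp only [lieInvariant_iff_forall_add_eq_zero, flip_eq_neg_one_smul_iff_isAlt]
  rfl

variable [LieAlgebra ℂ 𝔤] [LieModule ℂ 𝔤 V] [LieModule.IsIrreducible ℂ 𝔤 V] [FiniteDimensional ℂ V]
variable {B : LinearMap.BilinForm ℂ V} {ε : ℤˣ}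

lemma isOrthogonalRep_iff_eq_one (hB : B.lieInvariant 𝔤) (h0 : B ≠ 0) (hε : B.flip = ε • B) :
    IsOrthogonalRep (L := 𝔤) V ↔ ε = 1 := by
  rw [isOrthogonalRep_iff_exists_flip_eq_smul,
    exists_separatingLeft_lieInvariant_flip_eq_smul_iff hB h0 hε]

lemma isSymplecticRep_iff_eq_neg_one (hB : B.lieInvariant 𝔤) (h0 : B ≠ 0)
    (hε : B.flip = ε • B) : IsSymplecticRep (L := 𝔤) V ↔ ε = -1 := by
  rw [isSymplecticRep_iff_exists_flip_eq_smul,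
    exists_separatingLeft_lieInvariant_flip_eq_smul_iff hB h0 hε]

end OrthogonalSymplectic

section Main

variable {H : LieSubalgebra ℂ L} [H.IsCartanSubalgebra] {r : ℕ} {α : Fin r → Dual ℂ H}
variable {μ : Dual ℂ H} {V : Type} [AddCommGroup V] [Module ℂ V] [LieRingModule L V]
variable [LieModule ℂ L V]

lemma isHWIrrep_iff : IsHWIrrep H α μ V ↔
    LieModule.IsIrreducible ℂ L V ∧ ∃ v : V, IsHWVector H α μ v := by
  refine and_congr_right' (exists_congr fun v ↦ ⟨fun h ↦ ⟨h.1, ?_, h.2.2⟩, fun h ↦ ?_⟩)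
  · exact (LieModule.mem_weightSpace _ _).mpr h.2.1
  · exact ⟨h.ne_zero, h.lie_eq_smul, h.lie_eq_zero⟩

variable [FiniteDimensional ℂ L] [IsKilling ℂ L] [FiniteDimensional ℂ V]

lemma IsHWIrrep.exists_isPolarization (hb : IsBase H α) (hV : IsHWIrrep H α μ V)
    (hdual : IsDualPair (L := L) V V) :
    ∃ (B : LinearMap.BilinForm ℂ V) (ε : ℤˣ) (v u : V), IsPolarization H α μ B ε v u := by
  obtain ⟨_, v, hv⟩ := isHWIrrep_iff.mp hV
  obtain ⟨B, hsep, -, hinv⟩ := hdual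
  have : Nontrivial V := ⟨v, 0, hv.ne_zero⟩
  obtain ⟨ε, u, hB⟩ := hv.exists_isPolarization hb
    (lieInvariant_iff_forall_add_eq_zero.mpr hinv) (ne_zero_of_separatingLeft hsep)
  exact ⟨B, ε, v, u, hB⟩

end Main

/-- Suppose every fundamental weight of `𝔤` is self-dual, witnessed by
perfect invariant self-pairings of all the fundamental representations `F j` (of highest
weight `ϖ j`).  Then `V_μ` is orthogonal or symplectic; if orthogonal, the `𝔤`-invariant
subspace of `adj(𝔤) ⊗ S²V_μ` vanishes and that of `adj(𝔤) ⊗ Λ²V_μ` has dimension equal to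
the number of `j` with `⟨μ, α_j∨⟩ > 0`; if symplectic, the roles are exchanged. -/
theorem statement19
    {L : Type} [LieRing L] [LieAlgebra ℂ L] [FiniteDimensional ℂ L]
    [LieAlgebra.IsSemisimple ℂ L]
    (H : LieSubalgebra ℂ L) [H.IsCartanSubalgebra]
    {r : ℕ} (α : Fin r → Module.Dual ℂ H) (hc : Fin r → H)
    (hbase : IsBase H α) (hcoroot : ∀ j, IsCoroot H (α j) (hc j))
    (ϖ : Fin r → Module.Dual ℂ H)
    (hϖ : ∀ j k, ϖ j (hc k) = if j = k then (1 : ℂ) else 0)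
    (F : Fin r → Type) [∀ j, AddCommGroup (F j)] [∀ j, Module ℂ (F j)]
    [∀ j, LieRingModule L (F j)] [∀ j, LieModule ℂ L (F j)] [∀ j, FiniteDimensional ℂ (F j)]
    (hF : ∀ j, IsHWIrrep H α (ϖ j) (F j))
    (hselfdualfund : ∀ j, IsDualPair (L := L) (F j) (F j))
    (μ : Module.Dual ℂ H) (hμ : IsDomInt hc μ)
    (Vμ : Type) [AddCommGroup Vμ] [Module ℂ Vμ] [LieRingModule L Vμ]
    [LieModule ℂ L Vμ] [FiniteDimensional ℂ Vμ]
    (hVμ : IsHWIrrep H α μ Vμ) :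
    (IsOrthogonalRep (L := L) Vμ ∨ IsSymplecticRep (L := L) Vμ) ∧
    (IsOrthogonalRep (L := L) Vμ →
      symSquareInvariants L Vμ = ⊥ ∧
      Module.finrank ℂ (altSquareInvariants L Vμ) =
        (Finset.univ.filter fun j => μ (hc j) ≠ 0).card) ∧
    (IsSymplecticRep (L := L) Vμ →
      altSquareInvariants L Vμ = ⊥ ∧
      Module.finrank ℂ (symSquareInvariants L Vμ) =
        (Finset.univ.filter fun j => μ (hc j) ≠ 0).card) := by
  obtain ⟨_, v, hv⟩ := isHWIrrep_iff.mp hVμ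
  obtain ⟨B, ε, u, φ, hB, hφ⟩ := exists_isPolarization_tripleForm hbase hcoroot hϖ F
    (fun j ↦ (hF j).exists_isPolarization hbase (hselfdualfund j)) hμ hv
  rw [isOrthogonalRep_iff_eq_one hB.lieInvariant hB.ne_zero hB.flip_eq,
    isSymplecticRep_iff_eq_neg_one hB.lieInvariant hB.ne_zero hB.flip_eq]
  have hdim := hB.finrank_maxTrivSubmodule hbase hcoroot hϖ (fun j ↦ (hφ j).1)
    fun j ↦ (hφ j).2.2
  have hswap : ∀ s ∈ maxTrivSubmodule ℂ L (L ⊗[ℂ] (Vμ ⊗[ℂ] Vμ)), swapMap L Vμ s = -ε • s :=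
    fun s ↦ hB.swapMap_apply_of_mem_maxTrivSubmodule hbase hcoroot hϖ (fun j ↦ (hφ j).1)
      (fun j ↦ (hφ j).2.1) fun j ↦ (hφ j).2.2
  refine ⟨Int.units_eq_one_or ε, ?_, ?_⟩
  · rintro rfl
    have halt : ∀ s ∈ maxTrivSubmodule ℂ L _, swapMap L Vμ s = -s := by simpa using hswap
    exact ⟨symSquareInvariants_eq_bot halt, by
      rw [altSquareInvariants_eq_maxTrivSubmodule halt]; exact hdim⟩
  · rintro rfl
    have hsym : ∀ s ∈ maxTrivSubmodule ℂ L _, swapMap L Vμ s = s := by simpa using hswap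
    exact ⟨altSquareInvariants_eq_bot hsym, by
      rw [symSquareInvariants_eq_maxTrivSubmodule hsym]; exact hdim⟩

end AdjPaper
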